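/- arXiv:1704.01029 — 2 statements merged into one kernel-verified Lean document; each statement's English description precedes it below -/
import Mathlib

section
/- Let p ∈ [2, ∞) be a real number. For every n ∈ ℕ and every bilinear form T : ℝⁿ × ℝⁿ → ℝ one has (∑_{j=1}^{n} (∑_{i=1}^{n} |T(e_i,e_j)|^{p/(p−1)})^{2(p−1)/p})^{1/2} ≤ A_{p/(p−1)} · ‖T‖_{p,∞}, where A_r is the optimal Khintchine constant. -/
open MeasureTheory Real Filter

/-- The `j`-th Rademacher function, `r_j(t) = sgn(sin(2^j π t))`. -/
noncomputable def rademacher (j : ℕ) (t : ℝ) : ℝ :=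
  Real.sign (Real.sin ((2 : ℝ) ^ j * Real.pi * t))

/-- `p₀ ∈ (1,2)` is the unique solution of `Γ((p₀+1)/2) = √π / 2`. -/
noncomputable def khintchineP0 : ℝ :=
  sInf {p : ℝ | 1 < p ∧ p < 2 ∧ Real.Gamma ((p + 1) / 2) = Real.sqrt Real.pi / 2}

/-- The optimal constant `A_r` in the Khintchine inequality. -/
noncomputable def khintchineA (r : ℝ) : ℝ :=
  if r ≤ khintchineP0 then (2 : ℝ) ^ (1 / r - 1 / 2)
  else if r < 2 then
    (1 / Real.sqrt 2) * (Real.Gamma ((r + 1) / 2) / Real.sqrt Real.pi) ^ (-(1 / r))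
  else 1

/-- The `ℓ_p` norm of a vector in `ℝⁿ` (for finite `p`). -/
noncomputable def lpNorm (p : ℝ) {n : ℕ} (x : Fin n → ℝ) : ℝ :=
  (∑ i, |x i| ^ p) ^ (1 / p)

/-- The `ℓ_∞` norm of a vector in `ℝⁿ`. -/
noncomputable def linfNorm {n : ℕ} (x : Fin n → ℝ) : ℝ :=
  ⨆ i, |x i|

/-- The norm `‖T‖_{p,∞} = sup{|T(x,y)| : ‖x‖_{ℓ_p} ≤ 1, ‖y‖_{ℓ_∞} ≤ 1}` of a bilinear form. -/
noncomputable def bilinOpNorm (p : ℝ) {N n : ℕ}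
    (T : (Fin N → ℝ) →ₗ[ℝ] (Fin n → ℝ) →ₗ[ℝ] ℝ) : ℝ :=
  sSup {c : ℝ | ∃ (x : Fin N → ℝ) (y : Fin n → ℝ),
    lpNorm p x ≤ 1 ∧ linfNorm y ≤ 1 ∧ c = |T x y|}

namespace Khintchine

/-! ### Elementary bounds for `sin`, `cos`, `tan` and `-log cos` -/

lemma nonneg_of_hasDerivAt_nonneg {f f' : ℝ → ℝ} {b : ℝ}
    (hf : ∀ x ∈ Set.Icc 0 b, HasDerivAt f (f' x) x) (h0 : 0 ≤ f 0)
    (h : ∀ x ∈ Set.Icc 0 b, 0 ≤ f' x) {x : ℝ} (hx : x ∈ Set.Icc 0 b) : 0 ≤ f x := by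
  have hm : MonotoneOn f (Set.Icc 0 b) := by
    refine monotoneOn_of_deriv_nonneg (convex_Icc 0 b)
      (fun y hy => (hf y hy).continuousAt.continuousWithinAt)
      (fun y hy => ?_) (fun y hy => ?_)
    · exact (hf y (interior_subset hy)).differentiableAt.differentiableWithinAt
    · rw [(hf y (interior_subset hy)).deriv]
      exact h y (interior_subset hy)
  exact h0.trans (hm ⟨le_rfl, hx.1.trans hx.2⟩ hx hx.1)

lemma sub_cube_le_sin {x : ℝ} (hx : 0 ≤ x) : x - x ^ 3 / 6 ≤ sin x := by
  have := nonneg_of_hasDerivAt_nonneg (f := fun y => sin y - (y - y ^ 3 / 6))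
    (f' := fun y => cos y - (1 - 3 * y ^ 2 / 6)) (b := x) (fun y _ => by
      convert! (hasDerivAt_sin y).sub ((hasDerivAt_id y).sub ((hasDerivAt_pow 3 y).div_const 6))
        using 1) (by simp)
    (fun y hy => by have := one_sub_sq_div_two_le_cos (x := y); linarith) ⟨hx, le_rfl⟩
  linarith

lemma cos_le_quartic {x : ℝ} (hx : 0 ≤ x) : cos x ≤ 1 - x ^ 2 / 2 + x ^ 4 / 24 := by
  have := nonneg_of_hasDerivAt_nonneg (f := fun y => 1 - y ^ 2 / 2 + y ^ 4 / 24 - cos y)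
    (f' := fun y => sin y - (y - y ^ 3 / 6)) (b := x) (fun y _ => by
      convert! ((((hasDerivAt_pow 2 y).div_const 2).const_sub 1).add
        ((hasDerivAt_pow 4 y).div_const 24)).sub (hasDerivAt_cos y) using 1; norm_num; ring)
    (by simp)
    (fun y hy => by have := sub_cube_le_sin hy.1; linarith) ⟨hx, le_rfl⟩
  linarith

lemma sin_le_quintic {x : ℝ} (hx : 0 ≤ x) : sin x ≤ x - x ^ 3 / 6 + x ^ 5 / 120 := by
  have := nonneg_of_hasDerivAt_nonneg (f := fun y => y - y ^ 3 / 6 + y ^ 5 / 120 - sin y)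
    (f' := fun y => 1 - y ^ 2 / 2 + y ^ 4 / 24 - cos y) (b := x) (fun y _ => by
      convert! (((hasDerivAt_id y).sub ((hasDerivAt_pow 3 y).div_const 6)).add
        ((hasDerivAt_pow 5 y).div_const 120)).sub (hasDerivAt_sin y) using 1; norm_num; ring)
    (by simp)
    (fun y hy => by have := cos_le_quartic hy.1; linarith) ⟨hx, le_rfl⟩
  linarith

lemma sextic_le_cos {x : ℝ} (hx : 0 ≤ x) :
    1 - x ^ 2 / 2 + x ^ 4 / 24 - x ^ 6 / 720 ≤ cos x := by
  have := nonneg_of_hasDerivAt_nonneg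
    (f := fun y => cos y - (1 - y ^ 2 / 2 + y ^ 4 / 24 - y ^ 6 / 720))
    (f' := fun y => y - y ^ 3 / 6 + y ^ 5 / 120 - sin y) (b := x) (fun y _ => by
      convert! (hasDerivAt_cos y).sub (((((hasDerivAt_pow 2 y).div_const 2).const_sub 1).add
        ((hasDerivAt_pow 4 y).div_const 24)).sub ((hasDerivAt_pow 6 y).div_const 720)) using 1
      norm_num; ring)
    (by simp)
    (fun y hy => by have := sin_le_quintic hy.1; linarith) ⟨hx, le_rfl⟩
  linarith

/-- Taylor polynomial of `-log (cos x)` of degree `12`. -/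
noncomputable def logCosPoly (x : ℝ) : ℝ :=
  x ^ 2 / 2 + x ^ 4 / 12 + x ^ 6 / 45 + 17 * x ^ 8 / 2520 + 31 * x ^ 10 / 14175
    + 691 * x ^ 12 / 935550

/-- Taylor polynomial of `tan x` of degree `11`. -/
noncomputable def tanPoly (x : ℝ) : ℝ :=
  x + x ^ 3 / 3 + 2 * x ^ 5 / 15 + 17 * x ^ 7 / 315 + 62 * x ^ 9 / 2835
    + 1382 * x ^ 11 / 155925

lemma hasDerivAt_logCosPoly (x : ℝ) : HasDerivAt logCosPoly (tanPoly x) x := by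
  unfold logCosPoly tanPoly
  convert! ((((((hasDerivAt_pow 2 x).div_const 2).add ((hasDerivAt_pow 4 x).div_const 12)).add
    ((hasDerivAt_pow 6 x).div_const 45)).add (((hasDerivAt_pow 8 x).const_mul 17).div_const 2520)).add
    (((hasDerivAt_pow 10 x).const_mul 31).div_const 14175)).add
    (((hasDerivAt_pow 12 x).const_mul 691).div_const 935550) using 1
  norm_num; ring

lemma hasDerivAt_tanPoly (x : ℝ) : HasDerivAt tanPoly (1 + x ^ 2 + 2 * x ^ 4 / 3 + 17 * x ^ 6 / 45
    + 62 * x ^ 8 / 315 + 1382 * x ^ 10 / 14175) x := by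
  unfold tanPoly
  convert! (((((hasDerivAt_id x).add ((hasDerivAt_pow 3 x).div_const 3)).add
    (((hasDerivAt_pow 5 x).const_mul 2).div_const 15)).add
    (((hasDerivAt_pow 7 x).const_mul 17).div_const 315)).add
    (((hasDerivAt_pow 9 x).const_mul 62).div_const 2835)).add
    (((hasDerivAt_pow 11 x).const_mul 1382).div_const 155925) using 1
  norm_num; ring

lemma cos_pos_of_lt {x : ℝ} (hx : 0 ≤ x) (hx' : x < π / 2) : 0 < cos x :=
  cos_pos_of_mem_Ioo ⟨by linarith [pi_pos], hx'⟩

/-- Integrating-factor comparison with the differential equation `y' = 1 + y ^ 2`. -/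
lemma tanPoly_mul_cos_le_sin {x : ℝ} (hx : 0 ≤ x) (hx' : x < π / 2) :
    tanPoly x * cos x ≤ sin x := by
  have key := nonneg_of_hasDerivAt_nonneg (b := x)
    (f := fun y => (sin y - tanPoly y * cos y) * exp (-logCosPoly y))
    (f' := fun y => cos y * (1 - (1 + y ^ 2 + 2 * y ^ 4 / 3 + 17 * y ^ 6 / 45
      + 62 * y ^ 8 / 315 + 1382 * y ^ 10 / 14175) + tanPoly y ^ 2) * exp (-logCosPoly y))
    (fun y _ => by
      convert! ((hasDerivAt_sin y).sub ((hasDerivAt_tanPoly y).mul (hasDerivAt_cos y))).mul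
        (hasDerivAt_logCosPoly y).neg.exp using 1
      simp only [Pi.sub_apply, Pi.mul_apply, Pi.neg_apply]
      ring)
    (by simp [tanPoly])
    (fun y hy => by
      have hc : 0 ≤ cos y := (cos_pos_of_lt hy.1 (hy.2.trans_lt hx')).le
      refine mul_nonneg (mul_nonneg hc ?_) (exp_pos _).le
      have h0 := hy.1
      have : 1 - (1 + y ^ 2 + 2 * y ^ 4 / 3 + 17 * y ^ 6 / 45
        + 62 * y ^ 8 / 315 + 1382 * y ^ 10 / 14175) + tanPoly y ^ 2 =
        21844/467775 * y ^ 12 + 47981/3274425 * y ^ 14 + 232028/49116375 * y ^ 16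
        + 90616/63149625 * y ^ 18 + 171368/442047375 * y ^ 20
        + 1909924/24312605625 * y ^ 22 := by
        unfold tanPoly; ring
      rw [this]; positivity)
    ⟨hx, le_rfl⟩
  have := (mul_nonneg_iff_of_pos_right (exp_pos _)).1 key
  linarith

/-- `-log (cos x)`. -/
noncomputable def negLogCos (x : ℝ) : ℝ := -log (cos x)

lemma hasDerivAt_negLogCos {x : ℝ} (hx : 0 ≤ x) (hx' : x < π / 2) :
    HasDerivAt negLogCos (tan x) x := by
  have hc := cos_pos_of_lt hx hx'
  convert! ((hasDerivAt_cos x).log hc.ne').neg using 1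
  rw [tan_eq_sin_div_cos]; ring

lemma logCosPoly_le {x : ℝ} (hx : 0 ≤ x) (hx' : x < π / 2) : logCosPoly x ≤ negLogCos x := by
  have key := nonneg_of_hasDerivAt_nonneg (b := x)
    (f := fun y => negLogCos y - logCosPoly y)
    (f' := fun y => tan y - tanPoly y)
    (fun y hy => (hasDerivAt_negLogCos hy.1 (hy.2.trans_lt hx')).sub (hasDerivAt_logCosPoly y))
    (by simp [logCosPoly, negLogCos])
    (fun y hy => by
      have h2 := hy.2.trans_lt hx'
      rw [sub_nonneg, tan_eq_sin_div_cos, le_div_iff₀ (cos_pos_of_lt hy.1 h2)]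
      exact tanPoly_mul_cos_le_sin hy.1 h2)
    ⟨hx, le_rfl⟩
  linarith

/-- The Taylor lower bound for `2 * negLogCos x / x ^ 2`, as a polynomial in `X = x ^ 2`. -/
noncomputable def ratioPoly (X : ℝ) : ℝ :=
  1 + X / 6 + 2 * X ^ 2 / 45 + 17 * X ^ 3 / 1260 + 62 * X ^ 4 / 14175 + 691 * X ^ 5 / 467775

lemma ratioPoly_sq {x : ℝ} : x ^ 2 * ratioPoly (x ^ 2) = 2 * logCosPoly x := by
  unfold ratioPoly logCosPoly; ring

lemma one_le_ratioPoly {X : ℝ} (hX : 0 ≤ X) : 1 ≤ ratioPoly X := by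
  unfold ratioPoly
  have : 0 ≤ X / 6 + 2 * X ^ 2 / 45 + 17 * X ^ 3 / 1260 + 62 * X ^ 4 / 14175
    + 691 * X ^ 5 / 467775 := by positivity
  linarith

lemma ratioPoly_le {X : ℝ} (hX : 0 ≤ X) (hX' : X ≤ 36 / 25) : ratioPoly X ≤ 141 / 100 := by
  have : ratioPoly X ≤ ratioPoly (36 / 25) := by unfold ratioPoly; gcongr
  refine this.trans ?_
  unfold ratioPoly; norm_num

lemma tan_le_ratioPoly {x : ℝ} (hx : 0 < x) (hx' : x ≤ 6 / 5) :
    tan x ≤ x * (ratioPoly (x ^ 2) * (1 + 34 / 25 * (ratioPoly (x ^ 2) - 1))) := by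
  have hp : x < π / 2 := by linarith [pi_gt_d2]
  have hc := cos_pos_of_lt hx.le hp
  have hX : 0 ≤ x ^ 2 := sq_nonneg x
  have hX' : x ^ 2 ≤ 36 / 25 := by nlinarith
  rw [tan_eq_sin_div_cos, div_le_iff₀ hc]
  have h1 := one_le_ratioPoly hX
  have hpos : 0 ≤ x * (ratioPoly (x ^ 2) * (1 + 34 / 25 * (ratioPoly (x ^ 2) - 1))) := by
    have : 0 ≤ ratioPoly (x ^ 2) - 1 := by linarith
    positivity
  refine le_trans ?_ (mul_le_mul_of_nonneg_left (sextic_le_cos hx.le) hpos)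
  refine (sin_le_quintic hx.le).trans ?_
  have key : 1 - x ^ 2 / 6 + (x ^ 2) ^ 2 / 120 ≤
      (ratioPoly (x ^ 2) * (1 + 34 / 25 * (ratioPoly (x ^ 2) - 1))) *
      (1 - (x ^ 2) / 2 + (x ^ 2) ^ 2 / 24 - (x ^ 2) ^ 3 / 720) := by
    generalize x ^ 2 = X at hX hX'
    -- the difference of the two sides is `X * (3 / 50 - X * r X)` up to a positive term
    set r : ℝ → ℝ := fun Z => 31/1500 + 821/189000 * Z ^ 1 + 3337/2268000 * Z ^ 2
       + 30839/62370000 * Z ^ 3 + 36133213/26195400000 * Z ^ 4 + 2702471/23575860000 * Z ^ 5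
       + 137666971/3536379000000 * Z ^ 6 + 4019803/385786800000 * Z ^ 7 + 64495943/21881345062500 * Z ^ 8
       + 125893517/145875633750000 * Z ^ 9 + 8117177/1969321055625000 * Z ^ 11 with hr
    have hrX : X * r X ≤ 36 / 25 * r (36 / 25) := by
      have : 0 ≤ r X := by simp only [hr]; positivity
      have : r X ≤ r (36 / 25) := by simp only [hr]; gcongr
      gcongr
    have hnum : 36 / 25 * r (36 / 25) ≤ 3 / 50 := by simp only [hr]; norm_num
    have h12 : 0 ≤ 32574431/328220175937500 * X ^ 12 := by positivity
    have hfin : 0 ≤ X * (3 / 50 - X * r X) := mul_nonneg hX (by linarith)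
    have : (ratioPoly X * (1 + 34 / 25 * (ratioPoly X - 1))) *
        (1 - X / 2 + X ^ 2 / 24 - X ^ 3 / 720) - (1 - X / 6 + X ^ 2 / 120) =
        X * (3 / 50 - X * r X) + 32574431/328220175937500 * X ^ 12 := by
      simp only [hr, ratioPoly]; ring
    linarith
  calc x - x ^ 3 / 6 + x ^ 5 / 120 = x * (1 - x ^ 2 / 6 + (x ^ 2) ^ 2 / 120) := by ring
    _ ≤ x * _ := mul_le_mul_of_nonneg_left key hx.le
    _ = _ := by ring

lemma mul_log_le {w : ℝ} (hw : 1 ≤ w) : w * log w ≤ (w ^ 2 - 1) / 2 := by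
  have key := nonneg_of_hasDerivAt_nonneg (b := w - 1)
    (f := fun y => ((1 + y) - (1 + y)⁻¹) / 2 - log (1 + y))
    (f' := fun y => (1 + ((1 + y) ^ 2)⁻¹) / 2 - (1 + y)⁻¹)
    (fun y hy => by
      have h : (1 + y) ≠ 0 := by linarith [hy.1]
      have hd := (hasDerivAt_id y).const_add 1
      convert! ((hd.sub (hd.inv h)).div_const 2).sub (hd.log h) using 1
      simp [neg_div, one_div])
    (by simp)
    (fun y hy => by
      have h : 0 < (1 + y) := by linarith [hy.1]
      have : (1 + ((1 + y) ^ 2)⁻¹) / 2 - (1 + y)⁻¹ = (1 - (1 + y)⁻¹) ^ 2 / 2 := by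
        field_simp; ring
      rw [this]; positivity)
    (x := w - 1) ⟨by linarith, le_rfl⟩
  have hw0 : 0 < w := by linarith
  simp only [add_sub_cancel] at key
  have : w * log w ≤ w * ((w - w⁻¹) / 2) := mul_le_mul_of_nonneg_left (by linarith) hw0.le
  refine this.trans_eq ?_
  field_simp

lemma rpow_sub_one_ge {w q : ℝ} (hw : 1 ≤ w) (hw' : w ≤ 141 / 100) (hq : 9 / 10 ≤ q)
    (hq' : q ≤ 1) : q * (2 * (34 / 25) * (w - 1)) ≤ (2 * q + 1) * (w ^ q - 1) := by
  have hw0 : 0 < w := by linarith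
  have h1 : w * (1 - (1 - q) * log w) ≤ w ^ q := by
    have : w ^ q = w * exp (-((1 - q) * log w)) := by
      rw [rpow_def_of_pos hw0]
      nth_rw 2 [← exp_log hw0]
      rw [← exp_add]; congr 1; ring
    rw [this]
    have := add_one_le_exp (-((1 - q) * log w))
    exact mul_le_mul_of_nonneg_left (by linarith) hw0.le
  have h2 : w - (1 - q) * ((w ^ 2 - 1) / 2) ≤ w ^ q := by
    have := mul_le_mul_of_nonneg_left (mul_log_le hw) (by linarith : 0 ≤ 1 - q)
    linarith
  have h3 : (2 * q + 1) * (w - (1 - q) * ((w ^ 2 - 1) / 2) - 1) ≤ (2 * q + 1) * (w ^ q - 1) :=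
    mul_le_mul_of_nonneg_left (by linarith) (by linarith)
  refine le_trans ?_ h3
  have h4 : q * (2 * (34 / 25)) ≤ (2 * q + 1) * (1 - (1 - q) * ((w + 1) / 2)) := by
    have : (1 - q) * ((w + 1) / 2) ≤ (1 - q) * (241 / 200) :=
      mul_le_mul_of_nonneg_left (by linarith) (by linarith)
    nlinarith
  nlinarith [mul_le_mul_of_nonneg_right h4 (by linarith : 0 ≤ w - 1)]

/-- The differential inequality behind `antitoneOn_gap_div`. -/
lemma tan_div_negLogCos_le {x q : ℝ} (hx : 0 < x) (hx' : x ≤ 6 / 5) (hq : 9 / 10 ≤ q)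
    (hq' : q ≤ 1) : q * (x * tan x / negLogCos x - 2) ≤
      (2 * q + 1) * ((2 * negLogCos x / x ^ 2) ^ q - 1) := by
  have hp : x < π / 2 := by linarith [pi_gt_d2]
  have hX : 0 ≤ x ^ 2 := sq_nonneg x
  have hX0 : 0 < x ^ 2 := by positivity
  have hX' : x ^ 2 ≤ 36 / 25 := by nlinarith
  set w := ratioPoly (x ^ 2) with hw
  have hw1 : 1 ≤ w := one_le_ratioPoly hX
  have hL : x ^ 2 * w ≤ 2 * negLogCos x := by
    rw [hw, ratioPoly_sq]; linarith [logCosPoly_le hx.le hp]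
  have h1 : w ≤ 2 * negLogCos x / x ^ 2 := by rw [le_div_iff₀ hX0]; linarith
  have hLpos : 0 < negLogCos x := by nlinarith
  have h2 := rpow_sub_one_ge hw1 (ratioPoly_le hX hX') hq hq'
  have h3 : w ^ q ≤ (2 * negLogCos x / x ^ 2) ^ q :=
    rpow_le_rpow (by linarith) h1 (by linarith)
  have h4 : x * tan x / negLogCos x ≤ 2 * (1 + 34 / 25 * (w - 1)) := by
    rw [div_le_iff₀ hLpos]
    have h5 := mul_le_mul_of_nonneg_left (tan_le_ratioPoly hx hx') hx.le
    have h6 := mul_le_mul_of_nonneg_left hL (by linarith : 0 ≤ 1 + 34 / 25 * (w - 1))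
    nlinarith
  have h7 : (2 * q + 1) * (w ^ q - 1) ≤ (2 * q + 1) * ((2 * negLogCos x / x ^ 2) ^ q - 1) :=
    mul_le_mul_of_nonneg_left (by linarith) (by linarith)
  have h8 : q * (x * tan x / negLogCos x - 2) ≤ q * (2 * (34 / 25) * (w - 1)) :=
    mul_le_mul_of_nonneg_left (by linarith) (by linarith)
  linarith

/-! ### Comparison of the two distribution functions -/

lemma antitoneOn_of_hasDerivAt_nonpos {f f' : ℝ → ℝ} {s : Set ℝ} (hs : Convex ℝ s)
    (hf : ∀ x ∈ s, HasDerivAt f (f' x) x) (h : ∀ x ∈ s, f' x ≤ 0) : AntitoneOn f s :=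
  antitoneOn_of_deriv_nonpos hs (fun y hy => (hf y hy).continuousAt.continuousWithinAt)
    (fun y hy => (hf y (interior_subset hy)).differentiableAt.differentiableWithinAt)
    (fun y hy => by rw [(hf y (interior_subset hy)).deriv]; exact h y (interior_subset hy))

lemma rpow_neg_tangent_le {A B r : ℝ} (hA : 0 < A) (hB : 0 < B) (hr : 0 ≤ r) :
    B ^ (-r) + r * (B - A) * B ^ (-r - 1) ≤ A ^ (-r) := by
  have h1 : A ^ (-r) = B ^ (-r) * exp (-r * log (A / B)) := by
    rw [rpow_def_of_pos hA, rpow_def_of_pos hB, ← exp_add, log_div hA.ne' hB.ne']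
    congr 1; ring
  have h2 : B ^ (-r - 1) = B ^ (-r) / B := by rw [rpow_sub_one hB.ne']
  have h3 := add_one_le_exp (-r * log (A / B))
  have h4 := mul_le_mul_of_nonneg_left (log_le_sub_one_of_pos (div_pos hA hB)) hr
  have h5 : 1 + r * (B - A) / B ≤ exp (-r * log (A / B)) := by
    have : r * (B - A) / B = -(r * (A / B - 1)) := by field_simp; ring
    linarith
  calc B ^ (-r) + r * (B - A) * B ^ (-r - 1) = B ^ (-r) * (1 + r * (B - A) / B) := by
        rw [h2]; ring
    _ ≤ _ := by rw [h1]; exact mul_le_mul_of_nonneg_left h5 (rpow_nonneg hB.le _)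

lemma hasDerivAt_rpow_neg {f : ℝ → ℝ} {f' x p : ℝ} (hf : HasDerivAt f f' x) (h : 0 < f x) :
    HasDerivAt (fun y => f y ^ (-p)) (-p * f x ^ (-p - 1) * f') x := by
  convert! hf.rpow_const (p := -p) (Or.inl h.ne') using 1; ring

/-- Trapezoid (Hermite–Hadamard) bound for `z ↦ z ^ (-p)`. -/
lemma rpow_neg_sub_le {A B p : ℝ} (hA : 0 < A) (hAB : A ≤ B) (hp : 0 ≤ p) :
    A ^ (-p) - B ^ (-p) ≤ p * ((B - A) / 2) * (A ^ (-p - 1) + B ^ (-p - 1)) := by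
  have key := nonneg_of_hasDerivAt_nonneg (b := B - A) (x := B - A)
    (f := fun y => p * (y / 2) * (A ^ (-p - 1) + (A + y) ^ (-(p + 1))) -
      (A ^ (-p) - (A + y) ^ (-p)))
    (f' := fun y => p / 2 * (A ^ (-(p + 1)) - ((A + y) ^ (-(p + 1)) +
      (p + 1) * ((A + y) - A) * (A + y) ^ (-(p + 1) - 1))))
    (fun y hy => by
      have h : 0 < A + y := by linarith [hy.1]
      have hd := (hasDerivAt_id y).const_add A
      convert! ((((hasDerivAt_id y).div_const 2).const_mul p).mul
        ((hasDerivAt_rpow_neg (p := p + 1) hd h).const_add (A ^ (-p - 1)))).sub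
        ((hasDerivAt_rpow_neg (p := p) hd h).const_sub (A ^ (-p))) using 1
      simp only [id]
      rw [show -p - 1 = -(p + 1) by ring]
      ring)
    (by simp)
    (fun y hy => by
      have h : 0 < A + y := by linarith [hy.1]
      have := rpow_neg_tangent_le hA h (by linarith : 0 ≤ p + 1)
      exact mul_nonneg (by linarith) (by linarith))
    ⟨by linarith, le_rfl⟩
  simp only [add_sub_cancel] at key
  rw [show -(p + 1) = -p - 1 by ring] at key
  linarith

lemma negLogCos_pos {x : ℝ} (hx : 0 < x) (hx' : x < π / 2) : 0 < negLogCos x := by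
  have := logCosPoly_le hx.le hx'
  have : 0 < logCosPoly x := by unfold logCosPoly; positivity
  linarith

lemma one_le_negLogCos {x : ℝ} (hx : 6 / 5 ≤ x) (hx' : x < π / 2) : 1 ≤ negLogCos x := by
  refine le_trans ?_ (logCosPoly_le (by linarith) hx')
  have : logCosPoly (6 / 5) ≤ logCosPoly x := by unfold logCosPoly; gcongr
  refine le_trans ?_ this
  unfold logCosPoly; norm_num

lemma pi_div_two_sub_mul_tan_le {x : ℝ} (hx : 0 < x) (hx' : x < π / 2) :
    (π / 2 - x) * tan x ≤ 1 := by
  have h1 := lt_tan (by linarith : 0 < π / 2 - x) (by linarith)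
  rw [tan_pi_div_two_sub] at h1
  have ht := tan_pos_of_pos_of_lt_pi_div_two hx hx'
  calc (π / 2 - x) * tan x ≤ (tan x)⁻¹ * tan x := mul_le_mul_of_nonneg_right h1.le ht.le
    _ = 1 := inv_mul_cancel₀ ht.ne'

/-- `p` times the mass that `u ^ (-p - 1) du` gives to `{u > 0 | |cos u| < cos x}`. -/
noncomputable def cosTail (p x : ℝ) : ℝ :=
  ∑' k : ℕ, ((k * π + x) ^ (-p) - ((k + 1) * π - x) ^ (-p))

/-- `p` times the mass that `u ^ (-p - 1) du` gives to `{u > 0 | exp (-u ^ 2 / 2) < cos x}`. -/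
noncomputable def gaussTail (p x : ℝ) : ℝ := (2 * negLogCos x) ^ (-(p / 2))

lemma summable_add_rpow_neg {p c : ℝ} (hp : 1 < p) (hc : 0 < c) :
    Summable fun k : ℕ => (k * π + c) ^ (-p) := by
  rw [← summable_nat_add_iff 1]
  refine Summable.of_nonneg_of_le (fun k => rpow_nonneg (by positivity) _) (fun k => ?_)
    ((summable_nat_add_iff 1).2 (summable_nat_rpow.2 (by linarith : -p < -1)))
  have : ((k + 1 : ℕ) : ℝ) ≤ ((k + 1 : ℕ) : ℝ) * π + c := by
    have : ((k + 1 : ℕ) : ℝ) * 1 ≤ ((k + 1 : ℕ) : ℝ) * π := by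
      gcongr; linarith [pi_gt_three]
    linarith
  exact rpow_le_rpow_of_nonpos (by positivity) this (by linarith)

lemma summable_sub_rpow_neg {p x : ℝ} (hp : 1 < p) (hx : x < π) :
    Summable fun k : ℕ => ((k + 1) * π - x) ^ (-p) := by
  convert summable_add_rpow_neg hp (sub_pos.2 hx) using 3; ring

lemma summable_cosTail {p x : ℝ} (hp : 1 < p) (hx : 0 < x) (hx' : x < π) :
    Summable fun k : ℕ => ((k * π + x) ^ (-p) - ((k + 1) * π - x) ^ (-p)) :=
  (summable_add_rpow_neg hp hx).sub (summable_sub_rpow_neg hp hx')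

lemma summable_shifted_gap {p x : ℝ} (hp : 1 < p) (hx : 0 < x) (hx' : x < π) :
    Summable fun k : ℕ => (((k + 1) * π - x) ^ (-p) - ((k + 1) * π + x) ^ (-p)) := by
  refine (summable_sub_rpow_neg hp hx').sub ?_
  simpa using (summable_nat_add_iff 1).2 (summable_add_rpow_neg hp hx)

lemma cosTail_eq {p x : ℝ} (hp : 1 < p) (hx : 0 < x) (hx' : x < π) :
    cosTail p x = x ^ (-p) -
      ∑' k : ℕ, (((k + 1) * π - x) ^ (-p) - ((k + 1) * π + x) ^ (-p)) := by
  have h1 := summable_add_rpow_neg hp hx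
  have h2 := summable_sub_rpow_neg hp hx'
  have h3 : Summable fun k : ℕ => ((k + 1 : ℝ) * π + x) ^ (-p) := by
    simpa using (summable_nat_add_iff 1).2 h1
  unfold cosTail
  rw [h1.tsum_sub h2, h2.tsum_sub h3, h1.tsum_eq_zero_add]
  simp; ring

lemma antitoneOn_div_id {f f' : ℝ → ℝ} {s : Set ℝ} (hs : Convex ℝ s) (h0 : ∀ x ∈ s, 0 < x)
    (hf : ∀ x ∈ s, HasDerivAt f (f' x) x) (h : ∀ x ∈ s, f' x * x ≤ f x) :
    AntitoneOn (fun x => f x / x) s := by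
  refine antitoneOn_of_hasDerivAt_nonpos (f' := fun x => (f' x * x - f x * 1) / x ^ 2) hs
    (fun x hx => (hf x hx).div (hasDerivAt_id x) (h0 x hx).ne') (fun x hx => ?_)
  exact div_nonpos_of_nonpos_of_nonneg (by linarith [h x hx]) (sq_nonneg x)

lemma antitoneOn_gap_div {p : ℝ} (hp : 9 / 5 ≤ p) (hp' : p ≤ 2) :
    AntitoneOn (fun x => (x ^ (-p) - gaussTail p x) / x) (Set.Ioc 0 (6 / 5)) := by
  refine antitoneOn_div_id (f' := fun x => -p * x ^ (-p - 1) * 1 -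
    (-(p / 2) * (2 * negLogCos x) ^ (-(p / 2) - 1) * (2 * tan x))) (convex_Ioc _ _)
    (fun x hx => hx.1) (fun x hx => ?_) (fun x hx => ?_)
  · have hx2 : x < π / 2 := by linarith [pi_gt_d2, hx.2]
    exact (hasDerivAt_rpow_neg (hasDerivAt_id x) hx.1).sub
      (hasDerivAt_rpow_neg ((hasDerivAt_negLogCos hx.1.le hx2).const_mul 2)
        (by linarith [negLogCos_pos hx.1 hx2]))
  · have hx0 := hx.1
    have hx2 : x < π / 2 := by linarith [pi_gt_d2, hx.2]
    have hL := negLogCos_pos hx.1 hx2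
    have key := tan_div_negLogCos_le (q := p / 2) hx.1 hx.2 (by linarith) (by linarith)
    unfold gaussTail
    have e1 : x ^ (-p - 1) = x ^ (-p) / x := rpow_sub_one hx0.ne' _
    have e2 : (2 * negLogCos x) ^ (-(p / 2) - 1) =
      (2 * negLogCos x) ^ (-(p / 2)) / (2 * negLogCos x) := rpow_sub_one (by positivity) _
    have e3 : x ^ (-p) = (2 * negLogCos x / x ^ 2) ^ (p / 2) *
        (2 * negLogCos x) ^ (-(p / 2)) := by
      rw [div_rpow (by positivity) (by positivity), rpow_neg (by positivity : 0 ≤ 2 * negLogCos x),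
        ← rpow_natCast, ← rpow_mul hx0.le, rpow_neg hx0.le]
      have : (2 * negLogCos x) ^ (p / 2) ≠ 0 := (rpow_pos_of_pos (by positivity) _).ne'
      push_cast
      rw [show 2 * (p / 2) = p by ring]
      field_simp
    rw [e1, e2, e3]
    set G := (2 * negLogCos x) ^ (-(p / 2)) with hG
    have hGpos : 0 ≤ G := rpow_nonneg (by positivity) _
    set W := (2 * negLogCos x / x ^ 2) ^ (p / 2)
    have := mul_le_mul_of_nonneg_right key hGpos
    have e4 : (-p * (W * G / x) * 1 - -(p / 2) * (G / (2 * negLogCos x)) * (2 * tan x)) * x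
        = (p / 2 * (x * tan x / negLogCos x)) * G - p * (W * G) := by
      field_simp
      ring
    rw [e4]
    nlinarith

lemma shifted_gap_div_mono {p m x y : ℝ} (hp : 0 ≤ p) (hx : 0 < x) (hxy : x ≤ y) (hy : y < m) :
    ((m - x) ^ (-p) - (m + x) ^ (-p)) / x ≤ ((m - y) ^ (-p) - (m + y) ^ (-p)) / y := by
  have h : AntitoneOn (fun x => (-((m - x) ^ (-p) - (m + x) ^ (-p))) / x) (Set.Ioo 0 m) := by
    refine antitoneOn_div_id (f' := fun x => -(-p * (m - x) ^ (-p - 1) * (-1) -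
      (-p * (m + x) ^ (-p - 1) * 1))) (convex_Ioo _ _) (fun x hx => hx.1)
      (fun x hx => ?_) (fun x hx => ?_)
    · exact ((hasDerivAt_rpow_neg ((hasDerivAt_id x).const_sub m) (sub_pos.2 hx.2)).sub
        (hasDerivAt_rpow_neg ((hasDerivAt_id x).const_add m)
          (by simp only [id]; linarith [hx.1, hx.2]))).neg
    · have := rpow_neg_sub_le (A := m - x) (B := m + x) (p := p) (by linarith [hx.2])
        (by linarith [hx.1]) hp
      rw [show (m + x - (m - x)) / 2 = x by ring] at this
      linarith
  have := h ⟨hx, hxy.trans_lt hy⟩ ⟨hx.trans_le hxy, hy⟩ hxy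
  simp only [neg_div] at this
  linarith

lemma antitoneOn_cosTail_term {p : ℝ} (hp : 0 ≤ p) (hp' : p ≤ 2) (k : ℕ) :
    AntitoneOn (fun x => ((k * π + x) ^ (-p) - ((k + 1) * π - x) ^ (-p)) *
      (2 * negLogCos x) ^ (p / 2)) (Set.Ico (6 / 5) (π / 2)) := by
  have hk : 0 ≤ k * π := by positivity
  refine antitoneOn_of_hasDerivAt_nonpos (f' := fun x =>
      (-p * (k * π + x) ^ (-p - 1) * 1 - (-p * ((k + 1) * π - x) ^ (-p - 1) * (-1))) *
      (2 * negLogCos x) ^ (p / 2) + ((k * π + x) ^ (-p) - ((k + 1) * π - x) ^ (-p)) *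
      (2 * tan x * (p / 2) * (2 * negLogCos x) ^ (p / 2 - 1))) (convex_Ico _ _)
    (fun x hx => ?_) (fun x hx => ?_)
  all_goals
    have hx0 : 0 < x := by linarith [hx.1]
    have hL := negLogCos_pos hx0 hx.2
  · refine ((hasDerivAt_rpow_neg ((hasDerivAt_id x).const_add (k * π)) (by simp only [id]; linarith)).sub
        (hasDerivAt_rpow_neg ((hasDerivAt_id x).const_sub ((k + 1) * π)) ?_)).mul
        (((hasDerivAt_negLogCos hx0.le hx.2).const_mul 2).rpow_const (Or.inl (by positivity)))
    simp only [id]; linarith [hx.2, pi_pos]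
  · have ht := tan_pos_of_pos_of_lt_pi_div_two hx0 hx.2
    have hL1 := one_le_negLogCos hx.1 hx.2
    have hδ := pi_div_two_sub_mul_tan_le hx0 hx.2
    set A := k * π + x with hA
    set B := (k + 1) * π - x with hB
    have hA0 : 0 < A := by positivity
    have hAB : A ≤ B := by rw [hA, hB]; linarith [hx.2]
    have hV := rpow_neg_sub_le hA0 hAB hp
    rw [show (B - A) / 2 = π / 2 - x by rw [hA, hB]; ring] at hV
    have e1 : (2 * negLogCos x) ^ (p / 2 - 1) = (2 * negLogCos x) ^ (p / 2) / (2 * negLogCos x) :=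
      rpow_sub_one (by positivity) _
    rw [e1]
    set S := A ^ (-p - 1) + B ^ (-p - 1) with hS
    have hS0 : 0 ≤ S := add_nonneg (rpow_nonneg hA0.le _) (rpow_nonneg (hA0.le.trans hAB) _)
    have h1 : (A ^ (-p) - B ^ (-p)) * tan x ≤ S * (2 * negLogCos x) := by
      calc _ ≤ (p * (π / 2 - x) * S) * tan x := mul_le_mul_of_nonneg_right hV ht.le
        _ = S * (p * ((π / 2 - x) * tan x)) := by ring
        _ ≤ S * (2 * negLogCos x) := by
          refine mul_le_mul_of_nonneg_left ?_ hS0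
          have := mul_le_mul_of_nonneg_left hδ hp
          linarith
    set G := (2 * negLogCos x) ^ (p / 2)
    have hG : 0 ≤ G := rpow_nonneg (by positivity) _
    have h2 : (A ^ (-p) - B ^ (-p)) * tan x / (2 * negLogCos x) ≤ S := by
      rwa [div_le_iff₀ (by positivity)]
    have h3 := mul_le_mul_of_nonneg_left h2 (mul_nonneg hp hG)
    calc _ = p * G * ((A ^ (-p) - B ^ (-p)) * tan x / (2 * negLogCos x)) - p * G * S := by
          rw [hS]; field_simp; ring
      _ ≤ 0 := by linarith

/-- The difference of the two distribution functions changes sign at most once. -/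
lemma gaussTail_le_cosTail_of_le {p x y : ℝ} (hp : 9 / 5 ≤ p) (hp' : p ≤ 2) (hx : 0 < x)
    (hxy : x ≤ y) (hy : y < π / 2) (h : gaussTail p y ≤ cosTail p y) :
    gaussTail p x ≤ cosTail p x := by
  have near : ∀ x y : ℝ, 0 < x → x ≤ y → y ≤ 6 / 5 → gaussTail p y ≤ cosTail p y →
      gaussTail p x ≤ cosTail p x := by
    intro x y hx hxy hy h
    have hpi := pi_gt_d2
    have hy0 := hx.trans_le hxy
    rw [cosTail_eq (by linarith) hx (by linarith)]
    rw [cosTail_eq (by linarith) hy0 (by linarith)] at h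
    have h1 := antitoneOn_gap_div hp hp' ⟨hx, hxy.trans hy⟩ ⟨hy0, hy⟩ hxy
    have h2 : (∑' k : ℕ, (((k + 1) * π - x) ^ (-p) - ((k + 1) * π + x) ^ (-p))) / x ≤
        (∑' k : ℕ, (((k + 1) * π - y) ^ (-p) - ((k + 1) * π + y) ^ (-p))) / y := by
      rw [← tsum_div_const, ← tsum_div_const]
      refine Summable.tsum_le_tsum (fun k => ?_)
        ((summable_shifted_gap (by linarith) hx (by linarith)).div_const _)
        ((summable_shifted_gap (by linarith) hy0 (by linarith)).div_const _)
      refine shifted_gap_div_mono (by linarith) hx hxy ?_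
      have : 0 ≤ k * π := by positivity
      linarith
    have h3 : (∑' k : ℕ, (((k + 1) * π - y) ^ (-p) - ((k + 1) * π + y) ^ (-p))) / y ≤
        (y ^ (-p) - gaussTail p y) / y := by gcongr; linarith
    have h4 := (h2.trans h3).trans h1
    rw [div_le_div_iff_of_pos_right hx] at h4
    linarith
  have far : ∀ x y : ℝ, 6 / 5 ≤ x → x ≤ y → y < π / 2 → gaussTail p y ≤ cosTail p y →
      gaussTail p x ≤ cosTail p x := by
    intro x y hx hxy hy h
    have hpi := pi_gt_d2
    have e : ∀ z : ℝ, 6 / 5 ≤ z → z < π / 2 →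
        (gaussTail p z ≤ cosTail p z ↔ 1 ≤ cosTail p z * (2 * negLogCos z) ^ (p / 2)) := by
      intro z hz hz'
      have hL := negLogCos_pos (by linarith) hz'
      unfold gaussTail
      rw [rpow_neg (by positivity), inv_le_iff_one_le_mul₀ (rpow_pos_of_pos (by positivity) _)]
    rw [e x hx (by linarith)]
    rw [e y (by linarith) hy] at h
    refine h.trans ?_
    unfold cosTail
    rw [← tsum_mul_right, ← tsum_mul_right]
    exact Summable.tsum_le_tsum
      (fun k => antitoneOn_cosTail_term (by linarith) hp' k ⟨hx, by linarith⟩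
        ⟨by linarith, hy⟩ hxy)
      ((summable_cosTail (by linarith) (by linarith) (by linarith)).mul_right _)
      ((summable_cosTail (by linarith) (by linarith) (by linarith)).mul_right _)
  rcases le_total y (6 / 5) with h1 | h1
  · exact near x y hx hxy h1 h
  rcases le_total x (6 / 5) with h2 | h2
  · exact near x _ hx h2 le_rfl (far _ y le_rfl h1 hy h)
  · exact far x y h2 hxy hy h

/-! ### Comparison of integrals through distribution functions -/

lemma lintegral_one_sub_rpow {μ : Measure ℝ} {f : ℝ → ℝ} (hf : Measurable f) (h0 : ∀ u, 0 ≤ f u)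
    (h1 : ∀ u, f u ≤ 1) {s : ℝ} (hs : 1 ≤ s) :
    ∫⁻ u, ENNReal.ofReal (1 - (1 - f u) ^ s) ∂μ =
      ENNReal.ofReal s * ∫⁻ t in Set.Ioo 0 1, ENNReal.ofReal ((1 - t) ^ (s - 1)) * μ {u | t < f u} := by
  have hg : Continuous fun t : ℝ => s * |1 - t| ^ (s - 1) :=
    continuous_const.mul (Continuous.rpow_const (by fun_prop) fun _ => Or.inr (by linarith))
  have key := lintegral_comp_eq_lintegral_meas_lt_mul μ (f := f) (g := fun t => s * |1 - t| ^ (s - 1))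
    (ae_of_all _ h0) hf.aemeasurable (fun t _ => hg.intervalIntegrable _ _)
    (ae_of_all _ fun t => by positivity)
  have e1 : ∀ u, ∫ t in (0 : ℝ)..f u, s * |1 - t| ^ (s - 1) = 1 - (1 - f u) ^ s := by
    intro u
    have hd : ∀ t : ℝ, HasDerivAt (fun t => -(1 - t) ^ s) (s * (1 - t) ^ (s - 1)) t := fun t => by
      convert! (((hasDerivAt_id t).const_sub 1).rpow_const (p := s) (Or.inr hs)).neg using 1
      simp
    have hc : Continuous fun t : ℝ => s * (1 - t) ^ (s - 1) :=
      continuous_const.mul (Continuous.rpow_const (by fun_prop) fun _ => Or.inr (by linarith))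
    rw [intervalIntegral.integral_congr (g := fun t => s * (1 - t) ^ (s - 1)),
      intervalIntegral.integral_eq_sub_of_hasDerivAt (fun t _ => hd t) (hc.intervalIntegrable _ _)]
    · simp; ring
    · intro t ht
      rw [Set.uIcc_of_le (h0 u)] at ht
      simp only [abs_of_nonneg (by linarith [ht.2, h1 u] : 0 ≤ 1 - t)]
  simp only [e1] at key
  rw [key, ← lintegral_const_mul' _ _ ENNReal.ofReal_ne_top, ← lintegral_indicator measurableSet_Ioi,
    ← lintegral_indicator measurableSet_Ioo]
  refine lintegral_congr fun t => ?_
  by_cases ht : t ∈ Set.Ioo (0 : ℝ) 1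
  · rw [Set.indicator_of_mem ht, Set.indicator_of_mem (show t ∈ Set.Ioi 0 from ht.1),
      abs_of_nonneg (by linarith [ht.2]), ENNReal.ofReal_mul (by linarith)]
    ring
  · rw [Set.indicator_of_notMem ht]
    refine Set.indicator_apply_eq_zero.2 fun ht0 => ?_
    have : {u | t < f u} = ∅ := by
      ext u
      have : 1 ≤ t := by by_contra h; exact ht ⟨ht0, not_le.1 h⟩
      simpa using (h1 u).trans this
    rw [this]; simp

lemma ennreal_mul_add_mul_le {a b c d : ENNReal} (hab : a ≤ b) (hcd : c ≤ d) :
    b * c + a * d ≤ b * d + a * c := by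
  obtain ⟨e, rfl⟩ := le_iff_exists_add.1 hab
  obtain ⟨f, rfl⟩ := le_iff_exists_add.1 hcd
  calc _ ≤ (a + e) * c + a * (c + f) + e * f := le_self_add
    _ = _ := by ring

lemma lintegral_one_sub_rpow_mono_of_crossing {μ : Measure ℝ} {f g : ℝ → ℝ}
    (hf : Measurable f) (hf0 : ∀ u, 0 ≤ f u) (hf1 : ∀ u, f u ≤ 1)
    (hg : Measurable g) (hg0 : ∀ u, 0 ≤ g u) (hg1 : ∀ u, g u ≤ 1)
    (hcross : ∀ t t' : ℝ, 0 < t → t ≤ t' → t' < 1 → μ {u | t' < g u} ≤ μ {u | t' < f u} →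
      μ {u | t < g u} ≤ μ {u | t < f u})
    (hfin : ∫⁻ u, ENNReal.ofReal (1 - (1 - g u) ^ (2 : ℝ)) ∂μ ≠ ⊤)
    (h2 : ∫⁻ u, ENNReal.ofReal (1 - (1 - g u) ^ (2 : ℝ)) ∂μ ≤
      ∫⁻ u, ENNReal.ofReal (1 - (1 - f u) ^ (2 : ℝ)) ∂μ) {s : ℝ} (hs : 2 ≤ s) :
    ∫⁻ u, ENNReal.ofReal (1 - (1 - g u) ^ s) ∂μ ≤ ∫⁻ u, ENNReal.ofReal (1 - (1 - f u) ^ s) ∂μ := by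
  have hs1 : 1 ≤ s := by linarith
  rw [lintegral_one_sub_rpow hf hf0 hf1 one_le_two, lintegral_one_sub_rpow hg hg0 hg1 one_le_two] at h2
  rw [lintegral_one_sub_rpow hg hg0 hg1 one_le_two] at hfin
  rw [lintegral_one_sub_rpow hf hf0 hf1 hs1, lintegral_one_sub_rpow hg hg0 hg1 hs1]
  set F : ℝ → ENNReal := fun t => μ {u | t < f u} with hF
  set G : ℝ → ENNReal := fun t => μ {u | t < g u} with hG
  have anti : ∀ h : ℝ → ℝ, Measurable fun t => μ {u | t < h u} := fun h =>
    Antitone.measurable fun a b hab => measure_mono fun u (hu : b < h u) => lt_of_le_of_lt hab hu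
  have hFm : Measurable F := anti f
  have hGm : Measurable G := anti g
  obtain ⟨t0, ht0, ht0', hlow, hhigh⟩ : ∃ t0 : ℝ, 0 ≤ t0 ∧ t0 ≤ 1 ∧
      (∀ t, 0 < t → t < t0 → G t ≤ F t) ∧ (∀ t, t0 < t → t < 1 → F t ≤ G t) := by
    set S : Set ℝ := {t | (0 < t ∧ t < 1 ∧ G t ≤ F t) ∨ t = 0} with hS
    have hb : BddAbove S := ⟨1, by rintro t (h | h) <;> linarith [h]⟩
    have h0 : (0 : ℝ) ∈ S := Or.inr rfl
    refine ⟨sSup S, le_csSup hb h0, csSup_le ⟨0, h0⟩ ?_, fun t ht htS => ?_, fun t htS ht => ?_⟩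
    · rintro t (h | h) <;> linarith [h]
    · obtain ⟨t', h | h, htt'⟩ := exists_lt_of_lt_csSup ⟨0, h0⟩ htS
      · exact hcross t t' ht htt'.le h.2.1 h.2.2
      · linarith
    · by_contra hlt
      have : t ∈ S := Or.inl ⟨(le_csSup hb h0).trans_lt htS, ht, (not_le.1 hlt).le⟩
      exact absurd (le_csSup hb this) (not_le.2 htS)
  set c : ENNReal := ENNReal.ofReal ((1 - t0) ^ (s - 2)) with hc
  have hpt : ∀ t ∈ Set.Ioo (0 : ℝ) 1,
      ENNReal.ofReal ((1 - t) ^ (s - 1)) * G t + c * (ENNReal.ofReal ((1 - t) ^ ((2 : ℝ) - 1)) * F t)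
      ≤ ENNReal.ofReal ((1 - t) ^ (s - 1)) * F t +
        c * (ENNReal.ofReal ((1 - t) ^ ((2 : ℝ) - 1)) * G t) := by
    intro t ht
    have hy : 0 < 1 - t := by linarith [ht.2]
    have e : ENNReal.ofReal ((1 - t) ^ (s - 1)) =
        ENNReal.ofReal ((1 - t) ^ (s - 2)) * ENNReal.ofReal ((1 - t) ^ ((2 : ℝ) - 1)) := by
      rw [← ENNReal.ofReal_mul (by positivity), ← rpow_add hy]; congr 2; ring
    rw [e]
    set d := ENNReal.ofReal ((1 - t) ^ (s - 2))
    set w := ENNReal.ofReal ((1 - t) ^ ((2 : ℝ) - 1))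
    have main : d * G t + c * F t ≤ d * F t + c * G t := by
      rcases lt_trichotomy t t0 with h | h | h
      · have hcd : c ≤ d := ENNReal.ofReal_le_ofReal
          (rpow_le_rpow (by linarith) (by linarith) (by linarith))
        exact ennreal_mul_add_mul_le hcd (hlow t ht.1 h)
      · subst h; exact (add_comm _ _).le
      · have hcd : d ≤ c := ENNReal.ofReal_le_ofReal
          (rpow_le_rpow (by linarith [ht.2]) (by linarith) (by linarith))
        simpa only [add_comm] using ennreal_mul_add_mul_le hcd (hhigh t h ht.2)
    calc d * w * G t + c * (w * F t) = w * (d * G t + c * F t) := by ring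
      _ ≤ w * (d * F t + c * G t) := mul_le_mul_right main w
      _ = _ := by ring
  have hint := setLIntegral_mono' (μ := volume) measurableSet_Ioo hpt
  have hm : ∀ (r : ℝ) (H : ℝ → ENNReal), Measurable H →
      Measurable fun t => ENNReal.ofReal ((1 - t) ^ r) * H t := fun r H hH => by fun_prop
  rw [lintegral_add_left (hm _ _ hGm), lintegral_add_left (hm _ _ hFm),
    lintegral_const_mul _ (hm _ _ hFm), lintegral_const_mul _ (hm _ _ hGm)] at hint
  have h2' := (ENNReal.mul_le_mul_iff_right (by simp) (by simp)).1 h2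
  have hfin' : c * ∫⁻ t in Set.Ioo 0 1, ENNReal.ofReal ((1 - t) ^ ((2 : ℝ) - 1)) * G t ≠ ⊤ := by
    refine ENNReal.mul_ne_top ENNReal.ofReal_ne_top fun h => hfin ?_
    rw [h, ENNReal.mul_top (by simp)]
  refine mul_le_mul_right ?_ _
  refine (ENNReal.add_le_add_iff_right hfin').1 (le_trans ?_ hint)
  gcongr

/-! ### The measure `u ^ (-p - 1) du` on the half-line -/

/-- The measure `u ^ (-p - 1) du` on `(0, ∞)`. -/
noncomputable def powMeasure (p : ℝ) : Measure ℝ :=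
  (volume.restrict (Set.Ioi 0)).withDensity fun u => ENNReal.ofReal (u ^ (-p - 1))

lemma measurable_powDensity (p : ℝ) : Measurable fun u : ℝ => ENNReal.ofReal (u ^ (-p - 1)) := by
  fun_prop

lemma powMeasure_apply (p : ℝ) {s : Set ℝ} (hs : MeasurableSet s) :
    powMeasure p s = ∫⁻ u in s ∩ Set.Ioi 0, ENNReal.ofReal (u ^ (-p - 1)) := by
  rw [powMeasure, withDensity_apply _ hs, Measure.restrict_restrict hs]

lemma powMeasure_inter_Ioi (p : ℝ) {s : Set ℝ} (hs : MeasurableSet s) :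
    powMeasure p (s ∩ Set.Ioi 0) = powMeasure p s := by
  rw [powMeasure_apply p hs, powMeasure_apply p (hs.inter measurableSet_Ioi), Set.inter_assoc,
    Set.inter_self]

lemma powMeasure_Ioi {p a : ℝ} (hp : 0 < p) (ha : 0 < a) :
    powMeasure p (Set.Ioi a) = ENNReal.ofReal (a ^ (-p) / p) := by
  rw [powMeasure_apply p measurableSet_Ioi,
    Set.inter_eq_left.2 (Set.Ioi_subset_Ioi ha.le),
    ← ofReal_integral_eq_lintegral_ofReal (integrableOn_Ioi_rpow_of_lt (by linarith) ha),
    integral_Ioi_rpow_of_lt (by linarith) ha]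
  · congr 1; rw [show -p - 1 + 1 = -p by ring, neg_div_neg_eq]
  · exact (ae_restrict_iff' measurableSet_Ioi).2
      (ae_of_all _ fun u hu => rpow_nonneg (ha.trans hu).le _)

lemma powMeasure_Ioo {p a b : ℝ} (hp : 0 < p) (ha : 0 < a) (hab : a ≤ b) :
    powMeasure p (Set.Ioo a b) = ENNReal.ofReal ((a ^ (-p) - b ^ (-p)) / p) := by
  have hI : IntegrableOn (fun u : ℝ => u ^ (-p - 1)) (Set.Ioo a b) :=
    (integrableOn_Ioi_rpow_of_lt (by linarith) ha).mono_set Set.Ioo_subset_Ioi_self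
  rw [powMeasure_apply p measurableSet_Ioo,
    Set.inter_eq_left.2 (Set.Ioo_subset_Ioi_self.trans (Set.Ioi_subset_Ioi ha.le)),
    ← ofReal_integral_eq_lintegral_ofReal hI, ← integral_Ioc_eq_integral_Ioo,
    ← intervalIntegral.integral_of_le hab, integral_rpow]
  · congr 1; rw [show -p - 1 + 1 = -p by ring, div_neg, ← neg_div, neg_sub]
  · right
    refine ⟨by linarith, ?_⟩
    rw [Set.uIcc_of_le hab]
    exact fun h => absurd h.1 (not_le.2 ha)
  · exact (ae_restrict_iff' measurableSet_Ioo).2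
      (ae_of_all _ fun u hu => rpow_nonneg (ha.trans hu.1).le _)

lemma setOf_abs_cos_lt_inter {x : ℝ} (hx : 0 < x) (hx' : x < π / 2) :
    {u | |cos u| < cos x} ∩ Set.Ioi 0 =
      ⋃ k : ℕ, Set.Ioo (k * π + x) ((k + 1) * π - x) := by
  have base : ∀ v : ℝ, 0 ≤ v → v ≤ π → (|cos v| < cos x ↔ x < v ∧ v < π - x) := by
    intro v hv hv'
    rw [abs_lt, ← cos_pi_sub,
      strictAntiOn_cos.lt_iff_gt ⟨by linarith, by linarith⟩ ⟨hv, hv'⟩,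
      strictAntiOn_cos.lt_iff_gt ⟨hv, hv'⟩ ⟨by linarith, by linarith⟩]
    exact and_comm
  have shift : ∀ (u : ℝ) (k : ℕ), |cos (u - k * π)| = |cos u| := fun u k => by
    rw [cos_sub_nat_mul_pi, abs_mul, abs_pow, abs_neg, abs_one, one_pow, one_mul]
  ext u
  simp only [Set.mem_inter_iff, Set.mem_ofPred_eq, Set.mem_Ioi, Set.mem_iUnion, Set.mem_Ioo]
  constructor
  · rintro ⟨h, hu⟩
    have hk := Nat.floor_le (div_nonneg hu.le pi_pos.le)
    have hk' := Nat.lt_floor_add_one (u / π)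
    rw [le_div_iff₀ pi_pos] at hk
    rw [div_lt_iff₀ pi_pos] at hk'
    refine ⟨⌊u / π⌋₊, ?_⟩
    rw [← shift u ⌊u / π⌋₊, base _ (by linarith) (by linarith)] at h
    constructor <;> linarith [h.1, h.2]
  · rintro ⟨k, h1, h2⟩
    have : 0 ≤ k * π := by positivity
    refine ⟨?_, by linarith⟩
    rw [← shift u k, base _ (by linarith) (by linarith)]
    constructor <;> linarith

lemma powMeasure_abs_cos_lt {p x : ℝ} (hp : 1 < p) (hx : 0 < x) (hx' : x < π / 2) :
    powMeasure p {u | |cos u| < cos x} = ENNReal.ofReal (cosTail p x / p) := by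
  have hp0 : 0 < p := by linarith
  have hk : ∀ k : ℕ, 0 ≤ k * π := fun k => by positivity
  have hle : ∀ k : ℕ, k * π + x ≤ (k + 1) * π - x := fun k => by linarith
  have hnn : ∀ k : ℕ, 0 ≤ (k * π + x) ^ (-p) - ((k + 1) * π - x) ^ (-p) := fun k =>
    sub_nonneg.2 (rpow_le_rpow_of_nonpos (by linarith [hk k]) (hle k) (by linarith))
  rw [← powMeasure_inter_Ioi p (measurableSet_lt (by fun_prop) measurable_const),
    setOf_abs_cos_lt_inter hx hx', measure_iUnion ?_ fun _ => measurableSet_Ioo]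
  · rw [cosTail, ← tsum_div_const, ENNReal.ofReal_tsum_of_nonneg
      (fun k => div_nonneg (hnn k) hp0.le)
      ((summable_cosTail hp hx (by linarith [pi_pos])).div_const p)]
    exact tsum_congr fun k => powMeasure_Ioo hp0 (by linarith [hk k]) (hle k)
  · have : ∀ j k : ℕ, j < k → (j + 1) * π - x ≤ k * π + x := fun j k hjk => by
      have : ((j + 1 : ℕ) : ℝ) * π ≤ k * π := by gcongr; exact hjk
      push_cast at this
      linarith
    intro j k hjk
    refine Set.disjoint_left.2 fun u hj hk' => ?_
    rcases lt_or_gt_of_ne hjk with h | h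
    · linarith [this j k h, hj.2, hk'.1]
    · linarith [this k j h, hj.1, hk'.2]

lemma powMeasure_gauss_lt {p x : ℝ} (hp : 0 < p) (hx : 0 < x) (hx' : x < π / 2) :
    powMeasure p {u | exp (-u ^ 2 / 2) < cos x} = ENNReal.ofReal (gaussTail p x / p) := by
  have hL := negLogCos_pos hx hx'
  have hset : {u | exp (-u ^ 2 / 2) < cos x} ∩ Set.Ioi 0 = Set.Ioi (√(2 * negLogCos x)) := by
    ext u
    simp only [Set.mem_inter_iff, Set.mem_ofPred_eq, Set.mem_Ioi]
    rw [← lt_log_iff_exp_lt (cos_pos_of_lt hx.le hx')]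
    have e : log (cos x) = -negLogCos x := by unfold negLogCos; ring
    rw [e]
    constructor
    · rintro ⟨h, hu⟩
      rw [sqrt_lt' hu]; linarith
    · intro h
      have hu := (sqrt_nonneg _).trans_lt h
      refine ⟨?_, hu⟩
      rw [sqrt_lt' hu] at h; linarith
  rw [← powMeasure_inter_Ioi p (measurableSet_lt (by fun_prop) measurable_const), hset,
    powMeasure_Ioi hp (by positivity), gaussTail, sqrt_eq_rpow, ← rpow_mul (by positivity)]
  congr 3; ring

/-- Integral form of the comparison between `|cos u|` and `exp (-u ^ 2 / 2)`. -/
lemma lintegral_gauss_le_lintegral_cos {p : ℝ} (hp : 9 / 5 ≤ p) (hp' : p ≤ 2)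
    (hfin : ∫⁻ u, ENNReal.ofReal (1 - exp (-u ^ 2 / 2) ^ (2 : ℝ)) ∂powMeasure p ≠ ⊤)
    (h2 : ∫⁻ u, ENNReal.ofReal (1 - exp (-u ^ 2 / 2) ^ (2 : ℝ)) ∂powMeasure p ≤
      ∫⁻ u, ENNReal.ofReal (1 - |cos u| ^ (2 : ℝ)) ∂powMeasure p) {s : ℝ} (hs : 2 ≤ s) :
    ∫⁻ u, ENNReal.ofReal (1 - exp (-u ^ 2 / 2) ^ s) ∂powMeasure p ≤
      ∫⁻ u, ENNReal.ofReal (1 - |cos u| ^ s) ∂powMeasure p := by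
  have key := lintegral_one_sub_rpow_mono_of_crossing (μ := powMeasure p)
    (f := fun u => 1 - |cos u|) (g := fun u => 1 - exp (-u ^ 2 / 2))
    (by fun_prop) (fun u => sub_nonneg.2 (abs_cos_le_one u))
    (fun u => by linarith [abs_nonneg (cos u)]) (by fun_prop)
    (fun u => sub_nonneg.2 (exp_le_one_iff.2 (by linarith [sq_nonneg u])))
    (fun u => by linarith [exp_pos (-u ^ 2 / 2)]) ?_ (by simpa using hfin) (by simpa using h2) hs
  · simpa using key
  · have conv : ∀ t : ℝ, 0 < t → t < 1 →
        powMeasure p {u | t < 1 - |cos u|} = ENNReal.ofReal (cosTail p (arccos (1 - t)) / p) ∧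
        powMeasure p {u | t < 1 - exp (-u ^ 2 / 2)} =
          ENNReal.ofReal (gaussTail p (arccos (1 - t)) / p) := by
      intro t ht ht'
      have h1 : 0 < arccos (1 - t) := arccos_pos.2 (by linarith)
      have h2 : arccos (1 - t) < π / 2 := arccos_lt_pi_div_two.2 (by linarith)
      rw [← powMeasure_abs_cos_lt (by linarith) h1 h2, ← powMeasure_gauss_lt (by linarith) h1 h2,
        cos_arccos (by linarith) (by linarith)]
      constructor <;> congr 1 <;> ext u <;> simp only [Set.mem_ofPred_eq] <;>
        constructor <;> intro h <;> linarith
    intro t t' ht htt' ht' h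
    rw [(conv t ht (by linarith)).1, (conv t ht (by linarith)).2]
    rw [(conv t' (by linarith) ht').1, (conv t' (by linarith) ht').2] at h
    have h1 : 0 < arccos (1 - t) := arccos_pos.2 (by linarith)
    have h2 : arccos (1 - t') < π / 2 := arccos_lt_pi_div_two.2 (by linarith)
    have h12 : arccos (1 - t) ≤ arccos (1 - t') := arccos_le_arccos (by linarith)
    have hL := negLogCos_pos (h1.trans_le h12) h2
    have hpos : 0 < gaussTail p (arccos (1 - t')) / p := by unfold gaussTail; positivity
    have h3 : gaussTail p (arccos (1 - t')) ≤ cosTail p (arccos (1 - t')) := by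
      rw [ENNReal.ofReal_le_ofReal_iff'] at h
      rcases h with h | h
      · rwa [div_le_div_iff_of_pos_right (by linarith)] at h
      · linarith
    refine ENNReal.ofReal_le_ofReal ?_
    gcongr
    exact gaussTail_le_cosTail_of_le hp hp' h1 h12 h2 h3

/-! ### The integral representation of `|a| ^ p` -/

lemma lintegral_powMeasure (p : ℝ) {f : ℝ → ENNReal} (hf : Measurable f) :
    ∫⁻ u, f u ∂powMeasure p = ∫⁻ u in Set.Ioi 0, ENNReal.ofReal (u ^ (-p - 1)) * f u := by
  rw [powMeasure, lintegral_withDensity_eq_lintegral_mul _ (measurable_powDensity p) hf]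
  rfl

lemma lintegral_powMeasure_comp_mul (p : ℝ) {f : ℝ → ENNReal} (hf : Measurable f) {a : ℝ}
    (ha : 0 < a) :
    ∫⁻ u, f (a * u) ∂powMeasure p = ENNReal.ofReal (a ^ p) * ∫⁻ u, f u ∂powMeasure p := by
  rw [lintegral_powMeasure p hf,
    lintegral_powMeasure p (f := fun u => f (a * u)) (hf.comp (measurable_const_mul a)),
    ← lintegral_indicator measurableSet_Ioi, ← lintegral_indicator measurableSet_Ioi]
  set h : ℝ → ENNReal := (Set.Ioi 0).indicator fun u => ENNReal.ofReal (u ^ (-p - 1)) * f u with hh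
  have hm : Measurable h := ((measurable_powDensity p).mul hf).indicator measurableSet_Ioi
  have e : ∀ u, (Set.Ioi 0).indicator (fun u => ENNReal.ofReal (u ^ (-p - 1)) * f (a * u)) u =
      ENNReal.ofReal (a ^ (p + 1)) * h (a * u) := by
    intro u
    by_cases hu : u ∈ Set.Ioi (0 : ℝ)
    · have hau : a * u ∈ Set.Ioi (0 : ℝ) := mul_pos ha hu
      have hu' : (0 : ℝ) < u := hu
      rw [hh, Set.indicator_of_mem hu, Set.indicator_of_mem hau, ← mul_assoc,
        ← ENNReal.ofReal_mul (by positivity), mul_rpow ha.le hu'.le, ← mul_assoc, ← rpow_add ha]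
      simp
    · have hau : a * u ∉ Set.Ioi (0 : ℝ) := by
        rw [Set.mem_Ioi, mul_pos_iff_of_pos_left ha]; exact hu
      rw [hh, Set.indicator_of_notMem hu, Set.indicator_of_notMem hau, mul_zero]
  rw [lintegral_congr e, lintegral_const_mul' _ _ ENNReal.ofReal_ne_top,
    ← lintegral_map hm (measurable_const_mul a), Real.map_volume_mul_left ha.ne',
    lintegral_smul_measure, smul_eq_mul, ← mul_assoc, ← ENNReal.ofReal_mul (by positivity)]
  congr 2
  rw [abs_of_pos (by positivity), rpow_add_one ha.ne']
  field_simp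

/-- The constant `∫ (1 - cos u) u ^ (-p - 1) du`. -/
noncomputable def cosConst (p : ℝ) : ENNReal := ∫⁻ u, ENNReal.ofReal (1 - cos u) ∂powMeasure p

lemma cosConst_ne_zero {p : ℝ} (hp : 0 < p) : cosConst p ≠ 0 := by
  have hpi := pi_pos
  have h : powMeasure p (Set.Ioo (π / 2) π) ≤ cosConst p := by
    rw [← setLIntegral_one]
    refine le_trans (setLIntegral_mono' measurableSet_Ioo fun u hu => ?_) (setLIntegral_le_lintegral _ _)
    rw [ENNReal.one_le_ofReal]
    have := cos_nonpos_of_pi_div_two_le_of_le hu.1.le (by linarith [hu.2])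
    linarith
  rw [powMeasure_Ioo hp (by positivity) (by linarith)] at h
  have h2 : π ^ (-p) < (π / 2) ^ (-p) :=
    rpow_lt_rpow_of_neg (by positivity) (by linarith) (by linarith)
  refine (lt_of_lt_of_le (ENNReal.ofReal_pos.2 (div_pos ?_ hp)) h).ne'
  linarith

lemma cosConst_ne_top {p : ℝ} (hp : 0 < p) (hp' : p < 2) : cosConst p ≠ ⊤ := by
  have hm : Measurable fun u : ℝ => ENNReal.ofReal (1 - cos u) := by fun_prop
  rw [cosConst, lintegral_powMeasure p hm, ← Set.Ioc_union_Ioi_eq_Ioi zero_le_one]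
  refine ne_top_of_le_ne_top ?_ (lintegral_union_le _ _ _)
  rw [ENNReal.add_ne_top]
  constructor
  · have hI : IntegrableOn (fun u : ℝ => u ^ (1 - p)) (Set.Ioc 0 1) :=
      (intervalIntegral.intervalIntegrable_rpow' (by linarith)).1
    refine ne_top_of_le_ne_top (Integrable.lintegral_lt_top hI).ne
      (setLIntegral_mono' measurableSet_Ioc fun u hu => ?_)
    have hu0 := hu.1
    rw [← ENNReal.ofReal_mul (rpow_nonneg hu0.le _)]
    refine ENNReal.ofReal_le_ofReal ?_
    calc u ^ (-p - 1) * (1 - cos u) ≤ u ^ (-p - 1) * u ^ (2 : ℝ) := by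
          gcongr
          rw [rpow_two]
          nlinarith [one_sub_sq_div_two_le_cos (x := u)]
      _ = u ^ (1 - p) := by rw [← rpow_add hu0]; congr 1; ring
  · have hI : IntegrableOn (fun u : ℝ => u ^ (-p - 1) * 2) (Set.Ioi 1) :=
      (integrableOn_Ioi_rpow_of_lt (by linarith) one_pos).mul_const 2
    refine ne_top_of_le_ne_top (Integrable.lintegral_lt_top hI).ne
      (setLIntegral_mono' measurableSet_Ioi fun u hu => ?_)
    have hu0 : (0 : ℝ) < u := one_pos.trans hu
    rw [← ENNReal.ofReal_mul (rpow_nonneg hu0.le _)]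
    refine ENNReal.ofReal_le_ofReal ?_
    gcongr
    linarith [neg_one_le_cos u]

lemma lintegral_one_sub_cos_mul {p : ℝ} (hp : p ≠ 0) (a : ℝ) :
    ∫⁻ u, ENNReal.ofReal (1 - cos (a * u)) ∂powMeasure p =
      ENNReal.ofReal (|a| ^ p) * cosConst p := by
  rcases eq_or_ne a 0 with rfl | ha
  · simp [zero_rpow hp]
  · rw [cosConst, ← lintegral_powMeasure_comp_mul p (f := fun u => ENNReal.ofReal (1 - cos u))
      (by fun_prop) (abs_pos.2 ha)]
    refine lintegral_congr fun u => ?_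
    rcases abs_choice a with h | h <;> rw [h]
    rw [neg_mul, cos_neg]

lemma lintegral_one_sub_abs_cos_sq {p : ℝ} (hp : p ≠ 0) :
    ∫⁻ u, ENNReal.ofReal (1 - |cos u| ^ (2 : ℝ)) ∂powMeasure p =
      ENNReal.ofReal (2 ^ (p - 1)) * cosConst p := by
  have e : ∀ u, ENNReal.ofReal (1 - |cos u| ^ (2 : ℝ)) =
      ENNReal.ofReal (1 / 2) * ENNReal.ofReal (1 - cos (2 * u)) := fun u => by
    rw [← ENNReal.ofReal_mul (by positivity), rpow_two, sq_abs, cos_sq]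
    congr 1; ring
  rw [lintegral_congr e, lintegral_const_mul _ (by fun_prop), lintegral_one_sub_cos_mul hp,
    ← mul_assoc, ← ENNReal.ofReal_mul (by positivity), rpow_sub_one two_ne_zero]
  congr 2
  rw [abs_of_pos two_pos]; ring

/-- The `p`-th absolute moment of a standard Gaussian variable. -/
noncomputable def gaussMoment (p : ℝ) : ℝ := 2 ^ (p / 2) * Gamma ((p + 1) / 2) / √π

lemma gaussMoment_pos {p : ℝ} (hp : 0 < p) : 0 < gaussMoment p := by
  have := Gamma_pos_of_pos (by linarith : 0 < (p + 1) / 2)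
  unfold gaussMoment; positivity

lemma integral_gaussian_abs_rpow {p : ℝ} (hp : 0 < p) :
    ∫ x : ℝ, (√(2 * π))⁻¹ * exp (-x ^ 2 / 2) * |x| ^ p = gaussMoment p := by
  have h1 := integral_rpow_mul_exp_neg_mul_rpow (p := 2) (q := p) (b := 1 / 2)
    two_pos (by linarith) (by norm_num)
  have h2 := integral_comp_abs (f := fun x : ℝ => (√(2 * π))⁻¹ * exp (-x ^ 2 / 2) * x ^ p)
  simp only [sq_abs] at h2
  rw [h2]
  have h3 : ∫ x in Set.Ioi (0 : ℝ), (√(2 * π))⁻¹ * exp (-x ^ 2 / 2) * x ^ p =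
      (√(2 * π))⁻¹ * ∫ x in Set.Ioi (0 : ℝ), x ^ p * exp (-(1 / 2) * x ^ (2 : ℝ)) := by
    rw [← integral_const_mul]
    congr 1; ext x
    rw [rpow_two, show -(1 / 2) * x ^ 2 = -x ^ 2 / 2 by ring]; ring
  rw [h3, h1, gaussMoment]
  have h4 : ((1 : ℝ) / 2) ^ (-(p + 1) / 2) = 2 ^ (p / 2) * √2 := by
    rw [one_div, inv_rpow (by norm_num), ← rpow_neg (by norm_num), sqrt_eq_rpow,
      ← rpow_add two_pos]
    congr 1; ring
  rw [h4, sqrt_mul (by norm_num)]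
  field_simp

lemma lintegral_gaussianReal_abs_rpow {p : ℝ} (hp : 0 < p) :
    ∫⁻ x, ENNReal.ofReal (|x| ^ p) ∂ProbabilityTheory.gaussianReal 0 1 =
      ENNReal.ofReal (gaussMoment p) := by
  rw [ProbabilityTheory.gaussianReal_of_var_ne_zero 0 one_ne_zero,
    lintegral_withDensity_eq_lintegral_mul _ (ProbabilityTheory.measurable_gaussianPDF 0 1)
      (by fun_prop), ← integral_gaussian_abs_rpow hp, ofReal_integral_eq_lintegral_ofReal]
  · refine lintegral_congr fun x => ?_
    simp only [Pi.mul_apply, ProbabilityTheory.gaussianPDF, ProbabilityTheory.gaussianPDFReal]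
    rw [← ENNReal.ofReal_mul (by positivity)]
    simp
  · by_contra h
    have h1 := integral_gaussian_abs_rpow hp
    rw [integral_undef h] at h1
    exact (gaussMoment_pos hp).ne h1
  · exact ae_of_all _ fun x => by positivity

lemma lintegral_gaussianReal_one_sub_cos (t : ℝ) :
    ∫⁻ x, ENNReal.ofReal (1 - cos (x * t)) ∂ProbabilityTheory.gaussianReal 0 1 =
      ENNReal.ofReal (1 - exp (-t ^ 2 / 2)) := by
  have hI : Integrable (fun x => cos (x * t)) (ProbabilityTheory.gaussianReal 0 1) :=
    Integrable.of_bound (by fun_prop) 1 (ae_of_all _ fun x => abs_cos_le_one _)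
  have hc := ProbabilityTheory.charFun_gaussianReal (μ := 0) (v := 1) t
  rw [charFun_apply_real] at hc
  have hre := congrArg Complex.re hc
  have hIc : Integrable (fun x : ℝ => Complex.exp (t * x * Complex.I))
      (ProbabilityTheory.gaussianReal 0 1) :=
    Integrable.of_bound (by fun_prop) 1 (ae_of_all _ fun x => by
      rw [← Complex.ofReal_mul, Complex.norm_exp_ofReal_mul_I])
  have h1 : (∫ x, Complex.exp (t * x * Complex.I) ∂ProbabilityTheory.gaussianReal 0 1).re =
      ∫ x, cos (x * t) ∂ProbabilityTheory.gaussianReal 0 1 := by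
    have := (integral_re hIc).symm
    simp only [RCLike.re_eq_complex_re] at this
    rw [this]
    congr 1; ext x
    rw [← Complex.ofReal_mul, Complex.exp_ofReal_mul_I_re, mul_comm]
  rw [h1] at hre
  have h2 : (Complex.exp (t * (0 : ℝ) * Complex.I - (1 : NNReal) * t ^ 2 / 2)).re =
      exp (-t ^ 2 / 2) := by
    rw [← Complex.exp_ofReal_re]
    congr 2
    push_cast; ring
  rw [← ofReal_integral_eq_lintegral_ofReal (f := fun x => 1 - cos (x * t))
    ((integrable_const 1).sub hI)
    (ae_of_all _ fun x => sub_nonneg.2 (cos_le_one _)), integral_sub (integrable_const 1) hI, hre, h2]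
  simp

instance (p : ℝ) : SFinite (powMeasure p) := by unfold powMeasure; infer_instance

lemma lintegral_one_sub_gauss {p : ℝ} (hp : 0 < p) :
    ∫⁻ u, ENNReal.ofReal (1 - exp (-u ^ 2 / 2)) ∂powMeasure p =
      ENNReal.ofReal (gaussMoment p) * cosConst p := by
  simp only [← lintegral_gaussianReal_one_sub_cos]
  rw [lintegral_lintegral_swap (by fun_prop)]
  simp only [lintegral_one_sub_cos_mul hp.ne']
  rw [lintegral_mul_const _ (by fun_prop), lintegral_gaussianReal_abs_rpow hp]

lemma lintegral_one_sub_gauss_rpow {p : ℝ} (hp : 0 < p) {s : ℝ} (hs : 0 < s) :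
    ∫⁻ u, ENNReal.ofReal (1 - exp (-u ^ 2 / 2) ^ s) ∂powMeasure p =
      ENNReal.ofReal (s ^ (p / 2) * gaussMoment p) * cosConst p := by
  have h := lintegral_powMeasure_comp_mul p (f := fun u => ENNReal.ofReal (1 - exp (-u ^ 2 / 2)))
    (by fun_prop) (sqrt_pos.2 hs)
  rw [lintegral_one_sub_gauss hp, ← mul_assoc, ← ENNReal.ofReal_mul (by positivity),
    sqrt_eq_rpow, ← rpow_mul hs.le, show 1 / 2 * p = p / 2 by ring] at h
  rw [← h]
  refine lintegral_congr fun u => ?_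
  rw [← exp_mul, mul_pow, ← rpow_natCast (s ^ (1 / 2 : ℝ)) 2, ← rpow_mul hs.le]
  congr 3
  norm_num; ring

lemma gaussMoment_le_iff {p : ℝ} :
    gaussMoment p ≤ 2 ^ (p / 2 - 1) ↔ Gamma ((p + 1) / 2) ≤ √π / 2 := by
  rw [gaussMoment, rpow_sub_one two_ne_zero, div_le_div_iff₀ (by positivity) (by positivity),
    mul_assoc, mul_le_mul_iff_right₀ (by positivity), le_div_iff₀ two_pos]

lemma gaussMoment_le_lintegral_cos {p : ℝ} (hp : 9 / 5 ≤ p) (hp' : p < 2)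
    (hC : gaussMoment p ≤ 2 ^ (p / 2 - 1)) {s : ℝ} (hs : 2 ≤ s) :
    ENNReal.ofReal (s ^ (p / 2) * gaussMoment p) * cosConst p ≤
      ∫⁻ u, ENNReal.ofReal (1 - |cos u| ^ s) ∂powMeasure p := by
  have hp0 : 0 < p := by linarith
  rw [← lintegral_one_sub_gauss_rpow hp0 (by linarith)]
  refine lintegral_gauss_le_lintegral_cos hp hp'.le ?_ ?_ hs
  · rw [lintegral_one_sub_gauss_rpow hp0 two_pos]
    exact ENNReal.mul_ne_top ENNReal.ofReal_ne_top (cosConst_ne_top hp0 hp')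
  · rw [lintegral_one_sub_gauss_rpow hp0 two_pos, lintegral_one_sub_abs_cos_sq hp0.ne']
    gcongr
    calc (2 : ℝ) ^ (p / 2) * gaussMoment p ≤ 2 ^ (p / 2) * 2 ^ (p / 2 - 1) := by gcongr
      _ = 2 ^ (p - 1) := by rw [← rpow_add two_pos]; congr 1; ring

/-! ### Averages over signs -/

/-- The average of `f (c ± a₁ ± ⋯ ± aₙ)` over all choices of signs. -/
noncomputable def signMean {V : Type*} [AddCommGroup V] (f : V → ℝ) : V → List V → ℝ
  | c, [] => f c
  | c, a :: l => (signMean f (c + a) l + signMean f (c - a) l) / 2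

lemma signMean_mono {V : Type*} [AddCommGroup V] {f g : V → ℝ} (h : ∀ x, f x ≤ g x) (l : List V) :
    ∀ c, signMean f c l ≤ signMean g c l := by
  induction l with
  | nil => exact h
  | cons a l ih => intro c; simp only [signMean]; linarith [ih (c + a), ih (c - a)]

lemma signMean_const {V : Type*} [AddCommGroup V] (b : ℝ) (l : List V) :
    ∀ c, signMean (fun _ => b) c l = b := by
  induction l with
  | nil => exact fun _ => rfl
  | cons a l ih => intro c; simp only [signMean, ih]; ring

lemma signMean_cos (t : ℝ) (l : List ℝ) :
    ∀ c, signMean (fun a => cos (a * t)) c l = cos (c * t) * (l.map fun a => cos (a * t)).prod := by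
  induction l with
  | nil => intro c; simp [signMean]
  | cons a l ih =>
    intro c
    simp only [signMean, ih, List.map_cons, List.prod_cons]
    rw [add_mul, sub_mul, cos_add, cos_sub]; ring

lemma lintegral_one_sub_signMean_cos {p : ℝ} (hp : p ≠ 0) (l : List ℝ) :
    ∀ c, ∫⁻ t, ENNReal.ofReal (1 - signMean (fun a => cos (a * t)) c l) ∂powMeasure p =
      ENNReal.ofReal (signMean (fun a => |a| ^ p) c l) * cosConst p := by
  have hle : ∀ (l : List ℝ) (c t : ℝ), 0 ≤ 1 - signMean (fun a => cos (a * t)) c l := fun l c t => by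
    have := signMean_mono (g := fun _ => 1) (fun a => cos_le_one (a * t)) l c
    rw [signMean_const] at this
    linarith
  have hnn : ∀ (l : List ℝ) (c : ℝ), 0 ≤ signMean (fun a => |a| ^ p) c l := fun l c => by
    have := signMean_mono (f := fun _ => 0) (g := fun a : ℝ => |a| ^ p) (fun a => by positivity) l c
    rwa [signMean_const] at this
  have hm : ∀ (l : List ℝ) (c : ℝ), Measurable fun t => signMean (fun a => cos (a * t)) c l := by
    intro l
    induction l with
    | nil => intro c; simp only [signMean]; fun_prop
    | cons a l ih =>
      intro c
      simp only [signMean]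
      exact ((ih _).add (ih _)).div_const 2
  induction l with
  | nil => intro c; exact lintegral_one_sub_cos_mul hp c
  | cons a l ih =>
    intro c
    have e : ∀ t, ENNReal.ofReal (1 - signMean (fun a => cos (a * t)) c (a :: l)) =
        ENNReal.ofReal (1 / 2) *
          (ENNReal.ofReal (1 - signMean (fun a => cos (a * t)) (c + a) l) +
          ENNReal.ofReal (1 - signMean (fun a => cos (a * t)) (c - a) l)) := fun t => by
      rw [← ENNReal.ofReal_add (hle _ _ _) (hle _ _ _), ← ENNReal.ofReal_mul (by positivity)]
      congr 1; simp only [signMean]; ring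
    have hm1 := (((hm l (c + a)).const_sub 1).ennreal_ofReal)
    rw [lintegral_congr e, lintegral_const_mul' _ _ ENNReal.ofReal_ne_top, lintegral_add_left hm1,
      ih, ih, ← add_mul, ← mul_assoc, ← ENNReal.ofReal_add (hnn _ _) (hnn _ _),
      ← ENNReal.ofReal_mul (by positivity)]
    congr 2; simp only [signMean]; ring

/-- The Gaussian lower bound for the `p`-th moment when no coefficient dominates. -/
lemma gaussMoment_mul_le_signMean {p : ℝ} (hp : 9 / 5 ≤ p) (hp' : p < 2)
    (hC : gaussMoment p ≤ 2 ^ (p / 2 - 1)) {n : ℕ} (v : Fin n → ℝ) {σ : ℝ} (hσ : 0 < σ)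
    (hsum : ∑ i, v i ^ 2 = σ) (hmax : ∀ i, v i ^ 2 ≤ σ / 2) :
    gaussMoment p * σ ^ (p / 2) ≤ signMean (fun a => |a| ^ p) 0 (List.ofFn v) := by
  have hp0 : 0 < p := by linarith
  set b : Fin n → ℝ := fun i => v i ^ 2 / σ with hb
  have hb0 : ∀ i, 0 ≤ b i := fun i => by positivity
  have hb1 : ∑ i, b i = 1 := by rw [← Finset.sum_div, hsum, div_self hσ.ne']
  have hterm : ∀ i, ENNReal.ofReal (b i) * (ENNReal.ofReal (gaussMoment p * σ ^ (p / 2)) * cosConst p) ≤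
      ∫⁻ t, ENNReal.ofReal (b i * (1 - |cos (v i * t)| ^ (1 / b i))) ∂powMeasure p := by
    intro i
    simp only [ENNReal.ofReal_mul (hb0 i)]
    rw [lintegral_const_mul' _ _ ENNReal.ofReal_ne_top]
    rcases eq_or_ne (v i) 0 with hv | hv
    · simp [hb, hv]
    gcongr
    have hv2 : 0 < v i ^ 2 := by positivity
    have habs : ∀ t, |cos (v i * t)| = |cos (|v i| * t)| := fun t => by
      rcases abs_choice (v i) with h | h <;> rw [h]
      rw [neg_mul, cos_neg]
    simp only [habs]
    rw [lintegral_powMeasure_comp_mul p (f := fun t => ENNReal.ofReal (1 - |cos t| ^ (1 / b i)))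
      (by fun_prop) (abs_pos.2 hv)]
    have hs : 2 ≤ 1 / b i := by
      rw [le_div_iff₀ (by positivity), hb]
      simp only
      rw [← mul_div_assoc, div_le_one hσ]
      linarith [hmax i]
    refine le_trans (le_of_eq ?_) (mul_le_mul_right (gaussMoment_le_lintegral_cos hp hp' hC hs) _)
    rw [← mul_assoc, ← ENNReal.ofReal_mul (by positivity)]
    congr 2
    have : σ = v i ^ 2 * (1 / b i) := by rw [hb]; field_simp
    rw [this, mul_rpow hv2.le (by positivity), ← sq_abs, ← rpow_natCast, ← rpow_mul (abs_nonneg _)]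
    push_cast
    rw [show 2 * (p / 2) = p by ring]; ring
  have hpt : ∀ t, ∑ i, b i * (1 - |cos (v i * t)| ^ (1 / b i)) ≤
      1 - signMean (fun a => cos (a * t)) 0 (List.ofFn v) := by
    intro t
    have hgm := Real.geom_mean_le_arith_mean_weighted Finset.univ b
      (fun i => |cos (v i * t)| ^ (1 / b i)) (fun i _ => hb0 i) hb1 (fun i _ => by positivity)
    have h1 : ∏ i, |cos (v i * t)| ≤ ∏ i, (|cos (v i * t)| ^ (1 / b i)) ^ b i := by
      refine Finset.prod_le_prod (fun i _ => abs_nonneg _) fun i _ => ?_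
      rw [← rpow_mul (abs_nonneg _)]
      rcases eq_or_ne (b i) 0 with h | h
      · rw [h, mul_zero, rpow_zero]; exact abs_cos_le_one _
      · rw [one_div_mul_cancel h, rpow_one]
    have h2 : signMean (fun a => cos (a * t)) 0 (List.ofFn v) ≤ ∏ i, |cos (v i * t)| := by
      rw [signMean_cos, List.map_ofFn, List.prod_ofFn, zero_mul, cos_zero, one_mul]
      exact (le_abs_self _).trans (Finset.abs_prod _ _).le
    simp only [mul_sub, mul_one, Finset.sum_sub_distrib, hb1]
    linarith
  have hnn : ∀ i t, 0 ≤ b i * (1 - |cos (v i * t)| ^ (1 / b i)) := fun i t =>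
    mul_nonneg (hb0 i) (sub_nonneg.2 (rpow_le_one (abs_nonneg _) (abs_cos_le_one _)
      (one_div_nonneg.2 (hb0 i))))
  have key : ENNReal.ofReal (gaussMoment p * σ ^ (p / 2)) * cosConst p ≤
      ENNReal.ofReal (signMean (fun a => |a| ^ p) 0 (List.ofFn v)) * cosConst p := by
    rw [← lintegral_one_sub_signMean_cos hp0.ne']
    calc _ = ∑ i, ENNReal.ofReal (b i) * (ENNReal.ofReal (gaussMoment p * σ ^ (p / 2)) * cosConst p) := by
          rw [← Finset.sum_mul, ← ENNReal.ofReal_sum_of_nonneg fun i _ => hb0 i, hb1]; simp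
      _ ≤ ∑ i, ∫⁻ t, ENNReal.ofReal (b i * (1 - |cos (v i * t)| ^ (1 / b i))) ∂powMeasure p :=
          Finset.sum_le_sum fun i _ => hterm i
      _ = ∫⁻ t, ENNReal.ofReal (∑ i, b i * (1 - |cos (v i * t)| ^ (1 / b i))) ∂powMeasure p := by
          rw [← lintegral_finsetSum _ fun i _ => by fun_prop]
          refine lintegral_congr fun t => ?_
          rw [ENNReal.ofReal_sum_of_nonneg fun i _ => hnn i t]
      _ ≤ _ := lintegral_mono fun t => ENNReal.ofReal_le_ofReal (hpt t)
  have hC0 := gaussMoment_pos hp0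
  have := (ENNReal.mul_le_mul_iff_left (cosConst_ne_zero hp0) (cosConst_ne_top hp0 hp')).1 key
  rcases ENNReal.ofReal_le_ofReal_iff'.1 this with h | h
  · exact h
  · exact absurd h (not_le.2 (by positivity))

lemma signMean_neg {V : Type*} [AddCommGroup V] {f : V → ℝ} (hf : ∀ x, f (-x) = f x) (l : List V) :
    ∀ c, signMean f (-c) l = signMean f c l := by
  induction l with
  | nil => exact hf
  | cons a l ih =>
    intro c
    simp only [signMean]
    rw [show -c + a = -(c - a) by abel, show -c - a = -(c + a) by abel, ih, ih, add_comm]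

lemma signMean_zero_cons {V : Type*} [AddCommGroup V] {f : V → ℝ} (hf : ∀ x, f (-x) = f x)
    (a : V) (l : List V) : signMean f 0 (a :: l) = signMean f a l := by
  simp only [signMean, zero_add, zero_sub, signMean_neg hf]; ring

lemma signMean_perm {V : Type*} [AddCommGroup V] {f : V → ℝ} {l l' : List V} (h : l.Perm l') :
    ∀ c, signMean f c l = signMean f c l' := by
  induction h with
  | nil => exact fun _ => rfl
  | cons a _ ih => intro c; simp only [signMean, ih]
  | swap a b l =>
    intro c
    simp only [signMean]
    rw [add_right_comm c b a, show c + b - a = c - a + b by abel,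
      show c - b + a = c + a - b by abel, show c - b - a = c - a - b by abel]
    ring
  | trans _ _ ih ih' => intro c; rw [ih, ih']

lemma signMean_merge {V : Type*} [AddCommGroup V] (f : V → ℝ) (c a b : V) (l : List V) :
    signMean f c (a :: b :: l) =
      (signMean f c ((a + b) :: l) + signMean f c ((a - b) :: l)) / 2 := by
  simp only [signMean]
  rw [show c + a + b = c + (a + b) by abel, show c + a - b = c + (a - b) by abel,
    show c - a + b = c - (a - b) by abel, show c - a - b = c - (a + b) by abel]
  ring

lemma signMean_abs_rpow_mul (p s : ℝ) (l : List ℝ) :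
    ∀ c, signMean (fun a => |a| ^ p) (s * c) (l.map (s * ·)) =
      |s| ^ p * signMean (fun a => |a| ^ p) c l := by
  induction l with
  | nil => intro c; simp only [signMean, List.map_nil, abs_mul, mul_rpow (abs_nonneg _) (abs_nonneg _)]
  | cons a l ih =>
    intro c
    simp only [signMean, List.map_cons]
    rw [← mul_add, ← mul_sub, ih, ih]; ring

/-! ### The Nazarov–Podkorytov induction -/

lemma rpow_add_rpow_le {q x y : ℝ} (hq : 0 ≤ q) (hq' : q ≤ 1) (hx : 0 ≤ x) (hy : 0 ≤ y) :
    x ^ q + y ^ q ≤ 2 * ((x + y) / 2) ^ q := by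
  have := (Real.concaveOn_rpow hq hq').2 (show x ∈ Set.Ici 0 from hx) (show y ∈ Set.Ici 0 from hy)
    (show (0 : ℝ) ≤ 1 / 2 by norm_num) (show (0 : ℝ) ≤ 1 / 2 by norm_num) (by norm_num)
  simp only [smul_eq_mul] at this
  rw [show 1 / 2 * x + 1 / 2 * y = (x + y) / 2 by ring] at this
  linarith

lemma rpow_chord_le {q A B z : ℝ} (hq : 0 ≤ q) (hq' : q ≤ 1) (hA : 0 ≤ A) (hAz : A ≤ z)
    (hzB : z ≤ B) : (B - z) * A ^ q + (z - A) * B ^ q ≤ (B - A) * z ^ q := by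
  rcases (hAz.trans hzB).eq_or_lt with h | h
  · subst h
    obtain rfl := le_antisymm hAz hzB
    simp
  have h0 : 0 < B - A := by linarith
  have := (Real.concaveOn_rpow hq hq').2 (show A ∈ Set.Ici 0 from hA)
    (show B ∈ Set.Ici 0 from hA.trans (hAz.trans hzB))
    (show 0 ≤ (B - z) / (B - A) from div_nonneg (by linarith) h0.le)
    (show 0 ≤ (z - A) / (B - A) from div_nonneg (by linarith) h0.le) (by field_simp; ring)
  simp only [smul_eq_mul] at this
  rw [show (B - z) / (B - A) * A + (z - A) / (B - A) * B = z by field_simp; ring] at this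
  have h2 := mul_le_mul_of_nonneg_left this h0.le
  calc _ = (B - A) * ((B - z) / (B - A) * A ^ q + (z - A) / (B - A) * B ^ q) := by
        field_simp
    _ ≤ _ := h2

/-- The induction profile: `(1 + x) ^ q` reflected through its value at `x = 1`. -/
noncomputable def profile (q x : ℝ) : ℝ :=
  if 1 ≤ x then (1 + x) ^ q else 2 * 2 ^ q - (3 - x) ^ q

lemma profile_of_le {q x : ℝ} (hx : x ≤ 1) : profile q x = 2 * 2 ^ q - (3 - x) ^ q := by
  unfold profile
  split_ifs with h
  · obtain rfl := le_antisymm hx h; norm_num; ring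
  · rfl

lemma one_add_rpow_le_profile {q x : ℝ} (hq : 0 ≤ q) (hq' : q ≤ 1) (hx : 0 ≤ x) :
    (1 + x) ^ q ≤ profile q x := by
  rcases le_total 1 x with h | h
  · rw [profile, if_pos h]
  · rw [profile_of_le h]
    have := rpow_add_rpow_le hq hq' (x := 1 + x) (y := 3 - x) (by linarith) (by linarith)
    rw [show (1 + x + (3 - x)) / 2 = 2 by ring] at this
    linarith

lemma two_mul_profile_le {q x t : ℝ} (hq : 0 ≤ q) (hq' : q ≤ 1) (hx : x ≤ 1) (ht : |t| ≤ x) :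
    2 * profile q x ≤ profile q (x + t) + profile q (x - t) := by
  wlog ht0 : 0 ≤ t generalizing t with H
  · have := H (t := -t) (by rwa [abs_neg]) (by linarith)
    rw [sub_neg_eq_add, ← sub_eq_add_neg] at this
    linarith
  rw [abs_of_nonneg ht0] at ht
  rw [profile_of_le hx, profile_of_le (by linarith : x - t ≤ 1)]
  rcases le_or_gt (x + t) 1 with h | h
  · rw [profile_of_le h]
    have := rpow_add_rpow_le hq hq' (x := 3 - (x + t)) (y := 3 - (x - t)) (by linarith) (by linarith)
    rw [show (3 - (x + t) + (3 - (x - t))) / 2 = 3 - x by ring] at this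
    linarith
  · rw [profile, if_pos h.le]
    have h1 := rpow_chord_le hq hq' (A := 2) (B := 3 - (x - t)) (z := 3 - x) (by norm_num)
      (by linarith) (by linarith)
    have h2 := rpow_chord_le hq hq' (A := 2) (B := 3 - (x - t)) (z := 1 + (x + t)) (by norm_num)
      (by linarith) (by linarith)
    have h3 : (3 - (x - t) - 2) * (2 * 2 ^ q + (3 - (x - t)) ^ q) ≤
        (3 - (x - t) - 2) * (2 * (3 - x) ^ q + (1 + (x + t)) ^ q) := by linarith
    have h4 := le_of_mul_le_mul_left h3 (by linarith)
    linarith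

lemma log_le_two_mul_div {c : ℝ} (hc : 0 < c) (hc' : c ≤ 1) : log c ≤ -(2 * (1 - c) / (1 + c)) := by
  have h := le_log_one_add_of_nonneg (x := 1 / c - 1) (by rw [sub_nonneg, le_div_iff₀ hc]; linarith)
  rw [add_sub_cancel, one_div, log_inv] at h
  have e : 2 * (c⁻¹ - 1) / (c⁻¹ - 1 + 2) = 2 * (1 - c) / (1 + c) := by
    rw [div_eq_div_iff (by have := inv_pos.2 hc; linarith) (by linarith)]
    field_simp; ring
  linarith

lemma sum_mul_log_nonpos {c d : ℝ} (hc : 0 < c) (hd : 0 ≤ d) (hcd : c + d = 1) :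
    c ^ 2 * log (c ^ 2) + d ^ 2 * log (d ^ 2) + (1 + 2 * c * d) * log (1 + 2 * c * d) ≤ 0 := by
  rcases hd.eq_or_lt with rfl | hd
  · obtain rfl : c = 1 := by linarith
    simp
  have e := mul_pos hc hd
  have he : c * d ≤ 1 := by nlinarith
  have h1 := mul_le_mul_of_nonneg_left (log_le_two_mul_div hc (by linarith)) (sq_nonneg c)
  have h2 := mul_le_mul_of_nonneg_left (log_le_two_mul_div hd (by linarith)) (sq_nonneg d)
  have h3 := mul_log_le (w := 1 + 2 * c * d) (by nlinarith)
  rw [log_pow, log_pow]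
  push_cast
  have h4 : c ^ 2 * (2 * (1 - c) / (1 + c)) + d ^ 2 * (2 * (1 - d) / (1 + d)) =
      2 * (c * d) * (1 + 2 * (c * d)) / (2 + c * d) := by
    obtain rfl : d = 1 - c := by linarith
    have : 2 + c * (1 - c) ≠ 0 := by positivity
    have : 1 + c ≠ 0 := by positivity
    have : 1 + (1 - c) ≠ 0 := by positivity
    field_simp
    ring
  have h5 : (c * d) * (1 + c * d) ≤ 2 * (c * d) * (1 + 2 * (c * d)) / (2 + c * d) := by
    rw [le_div_iff₀ (by positivity)]
    nlinarith [mul_pos e e]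
  nlinarith

lemma add_le_rpow {z q : ℝ} (hz : 0 ≤ z) (hq : 0 < q) : z - (1 - q) * (z * log z) ≤ z ^ q := by
  rcases hz.eq_or_lt with rfl | hz
  · simp [zero_rpow hq.ne']
  have h1 : z ^ q = z * exp ((q - 1) * log z) := by
    rw [show q = (q - 1) + 1 by ring, rpow_add_one hz.ne', rpow_def_of_pos hz]
    rw [mul_comm, mul_comm (log z)]; simp
  have h2 := mul_le_mul_of_nonneg_left (add_one_le_exp ((q - 1) * log z)) hz.le
  rw [h1]; linarith

lemma four_rpow_le {q a : ℝ} (hq : 0 < q) (hq' : q ≤ 1) (ha : |a| ≤ 1) :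
    2 * 4 ^ q ≤ ((1 + a) ^ 2) ^ q + ((1 - a) ^ 2) ^ q + (6 - 2 * a ^ 2) ^ q := by
  wlog ha0 : 0 ≤ a generalizing a with H
  · have := H (a := -a) (by rwa [abs_neg]) (by linarith)
    rw [neg_sq, ← sub_eq_add_neg, sub_neg_eq_add] at this
    linarith
  rw [abs_of_nonneg ha0] at ha
  set c := (1 + a) / 2 with hc
  set d := (1 - a) / 2 with hd
  have hd0 : 0 ≤ d := by rw [hd]; linarith
  have hc0 : 0 < c := by rw [hc]; linarith
  have hcd : c + d = 1 := by rw [hc, hd]; ring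
  have h := sum_mul_log_nonpos hc0 hd0 hcd
  have h1 := add_le_rpow (sq_nonneg c) hq
  have h2 := add_le_rpow (sq_nonneg d) hq
  have h3 := add_le_rpow (z := 1 + 2 * c * d) (by positivity) hq
  have h4 : c ^ 2 + d ^ 2 + (1 + 2 * c * d) = 2 := by nlinarith
  have h5 : 2 ≤ (c ^ 2) ^ q + (d ^ 2) ^ q + (1 + 2 * c * d) ^ q := by nlinarith
  have e1 : (1 + a) ^ 2 = 4 * c ^ 2 := by rw [hc]; ring
  have e2 : (1 - a) ^ 2 = 4 * d ^ 2 := by rw [hd]; ring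
  have e3 : 6 - 2 * a ^ 2 = 4 * (1 + 2 * c * d) := by rw [hc, hd]; ring
  rw [e1, e2, e3, mul_rpow (by norm_num) (sq_nonneg c), mul_rpow (by norm_num) (sq_nonneg d),
    mul_rpow (by norm_num) (by positivity)]
  have : (0 : ℝ) ≤ 4 ^ q := by positivity
  nlinarith

lemma abs_rpow_eq (p x : ℝ) : |x| ^ p = (x ^ 2) ^ (p / 2) := by
  rw [← sq_abs, ← rpow_natCast, ← rpow_mul (abs_nonneg _)]
  congr 1; push_cast; ring

lemma mul_profile_le_pair {p C a : ℝ} (hp : 0 < p) (hp' : p ≤ 2) (hC : C ≤ 2 ^ (p / 2 - 1))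
    (ha : |a| ≤ 1) : C * profile (p / 2) (a ^ 2) ≤ (|1 + a| ^ p + |1 - a| ^ p) / 2 := by
  have ha2 : a ^ 2 ≤ 1 := (sq_le_one_iff_abs_le_one a).2 ha
  have h := four_rpow_le (q := p / 2) (by linarith) (by linarith) ha
  rw [abs_rpow_eq, abs_rpow_eq, profile_of_le ha2]
  have hpos : 0 ≤ 2 * (2 : ℝ) ^ (p / 2) - (3 - a ^ 2) ^ (p / 2) := by
    have h1 : (3 - a ^ 2) ^ (p / 2) ≤ (2 * (3 / 2)) ^ (p / 2) := by
      gcongr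
      · linarith
      · nlinarith
    rw [mul_rpow (by norm_num) (by norm_num)] at h1
    have h2 : ((3 : ℝ) / 2) ^ (p / 2) ≤ (3 / 2) ^ (1 : ℝ) :=
      rpow_le_rpow_of_exponent_le (by norm_num) (by linarith)
    rw [rpow_one] at h2
    have h3 : (0 : ℝ) ≤ 2 ^ (p / 2) := by positivity
    nlinarith
  have e1 : (6 - 2 * a ^ 2) ^ (p / 2) = 2 ^ (p / 2) * (3 - a ^ 2) ^ (p / 2) := by
    rw [← mul_rpow (by norm_num) (by linarith)]; congr 1; ring
  have e2 : (4 : ℝ) ^ (p / 2) = 2 ^ (p / 2) * 2 ^ (p / 2) := by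
    rw [← mul_rpow (by norm_num) (by norm_num)]; norm_num
  refine (mul_le_mul_of_nonneg_right hC hpos).trans ?_
  rw [rpow_sub_one two_ne_zero]
  rw [e1, e2] at h
  linarith

lemma map_sq_sum_nonneg (l : List ℝ) : 0 ≤ (l.map (· ^ 2)).sum :=
  List.sum_nonneg (by simp only [List.mem_map]; rintro _ ⟨a, _, rfl⟩; positivity)

lemma gaussMoment_mul_le_signMean_list {p : ℝ} (hp : 9 / 5 ≤ p) (hp' : p < 2)
    (hC : gaussMoment p ≤ 2 ^ (p / 2 - 1)) (l : List ℝ) {σ : ℝ} (hσ : 0 < σ)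
    (hsum : (l.map (· ^ 2)).sum = σ) (hmax : ∀ a ∈ l, a ^ 2 ≤ σ / 2) :
    gaussMoment p * σ ^ (p / 2) ≤ signMean (fun a => |a| ^ p) 0 l := by
  have := gaussMoment_mul_le_signMean hp hp' hC (fun i : Fin l.length => l.get i) hσ ?_
    (fun i => hmax _ (l.get_mem i))
  · rwa [List.ofFn_get] at this
  · rw [← List.sum_ofFn, ← hsum]
    conv_rhs => rw [← List.ofFn_get l, List.map_ofFn]
    rfl

lemma abs_neg_rpow (p x : ℝ) : |-x| ^ p = |x| ^ p := by rw [abs_neg]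

/-- Pulling the coefficient `a` out of a sum. -/
lemma signMean_eq_rescaled (p : ℝ) {a : ℝ} (ha : a ≠ 0) (l : List ℝ) :
    signMean (fun a => |a| ^ p) a l =
      |a| ^ p * signMean (fun a => |a| ^ p) 1 (l.map (a⁻¹ * ·)) := by
  rw [← signMean_abs_rpow_mul, mul_one, List.map_map]
  congr 1
  conv_lhs => rw [← List.map_id l]
  refine List.map_congr_left fun x _ => ?_
  simp [ha]

lemma map_sq_sum_rescaled (a : ℝ) (l : List ℝ) :
    ((l.map (a⁻¹ * ·)).map (· ^ 2)).sum = (l.map (· ^ 2)).sum / a ^ 2 := by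
  rw [List.map_map, div_eq_inv_mul, ← List.sum_map_mul_left]
  congr 1
  refine List.map_congr_left fun x _ => ?_
  simp [mul_pow]

lemma mul_profile_le_signMean {p : ℝ} (hp : 9 / 5 ≤ p) (hp' : p < 2)
    (hC : gaussMoment p ≤ 2 ^ (p / 2 - 1)) (n : ℕ) :
    ∀ l : List ℝ, l.length = n →
      gaussMoment p * profile (p / 2) (l.map (· ^ 2)).sum ≤ signMean (fun a => |a| ^ p) 1 l := by
  have hp0 : 0 < p := by linarith
  have hC0 := (gaussMoment_pos hp0).le
  have hq : 0 ≤ p / 2 := by linarith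
  have hq' : p / 2 ≤ 1 := by linarith
  induction n with
  | zero =>
    intro l hl
    obtain rfl := List.length_eq_zero_iff.1 hl
    have := mul_profile_le_pair hp0 hp'.le hC (a := 0) (by simp)
    simpa [signMean] using this
  | succ n ih =>
    have small : ∀ l : List ℝ, l.length = n + 1 → (l.map (· ^ 2)).sum ≤ 1 →
        gaussMoment p * profile (p / 2) (l.map (· ^ 2)).sum ≤ signMean (fun a => |a| ^ p) 1 l := by
      intro l hl hx
      match l, hl, hx with
      | [a], _, hx =>
        simp only [List.map_cons, List.map_nil, List.sum_cons, List.sum_nil, add_zero] at hx ⊢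
        exact mul_profile_le_pair hp0 hp'.le hC ((sq_le_one_iff_abs_le_one a).1 hx)
      | a :: b :: l, hl, hx =>
        rw [signMean_merge]
        have h1 := ih ((a + b) :: l) (by simpa using hl)
        have h2 := ih ((a - b) :: l) (by simpa using hl)
        have h0 := map_sq_sum_nonneg l
        simp only [List.map_cons, List.sum_cons] at hx h1 h2 ⊢
        set y := (l.map (· ^ 2)).sum
        have h3 := two_mul_profile_le hq hq' hx (t := 2 * a * b)
          (abs_le.2 ⟨by nlinarith [sq_nonneg (a + b)], by nlinarith [sq_nonneg (a - b)]⟩)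
        rw [show a ^ 2 + (b ^ 2 + y) + 2 * a * b = (a + b) ^ 2 + y by ring,
          show a ^ 2 + (b ^ 2 + y) - 2 * a * b = (a - b) ^ 2 + y by ring] at h3
        have h4 := mul_le_mul_of_nonneg_left h3 hC0
        linarith
    intro l hl
    rcases le_or_gt (l.map (· ^ 2)).sum 1 with hx | hx
    · exact small l hl hx
    by_cases hmax : ∀ a ∈ l, a ^ 2 ≤ (1 + (l.map (· ^ 2)).sum) / 2
    · rw [profile, if_pos hx.le, ← signMean_zero_cons (abs_neg_rpow p)]
      refine gaussMoment_mul_le_signMean_list hp hp' hC (1 :: l) (by linarith) (by simp) ?_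
      rintro a (_ | ⟨_, h⟩)
      · linarith
      · exact hmax a h
    · push Not at hmax
      obtain ⟨a, hal, ha⟩ := hmax
      have ha2 : 0 < a ^ 2 := by linarith
      have ha0 : a ≠ 0 := by rintro rfl; norm_num at ha2
      have hperm := List.perm_cons_erase hal
      have e1 : signMean (fun a => |a| ^ p) 1 l = |a| ^ p *
          signMean (fun a => |a| ^ p) 1 ((1 :: l.erase a).map (a⁻¹ * ·)) := by
        rw [← signMean_eq_rescaled p ha0, ← signMean_zero_cons (abs_neg_rpow p) 1,
          ← signMean_zero_cons (abs_neg_rpow p) a, signMean_perm (hperm.cons 1),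
          signMean_perm (List.Perm.swap _ _ _)]
      have e2 : (l.map (· ^ 2)).sum = a ^ 2 + ((l.erase a).map (· ^ 2)).sum := by
        rw [(hperm.map _).sum_eq]; simp
      have hlen : ((1 :: l.erase a).map (a⁻¹ * ·)).length = n + 1 := by
        rw [List.length_map, ← hl, hperm.length_eq]; simp
      have e3 := map_sq_sum_rescaled a (1 :: l.erase a)
      have hs := small _ hlen (by
        rw [e3, div_le_one ha2]
        simp only [List.map_cons, List.sum_cons, one_pow]
        linarith)
      have h1 := one_add_rpow_le_profile hq hq' (map_sq_sum_nonneg ((1 :: l.erase a).map (a⁻¹ * ·)))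
      rw [e1, profile, if_pos hx.le]
      have e4 : (1 + (l.map (· ^ 2)).sum) ^ (p / 2) = |a| ^ p *
          (1 + (((1 :: l.erase a).map (a⁻¹ * ·)).map (· ^ 2)).sum) ^ (p / 2) := by
        rw [abs_rpow_eq, ← mul_rpow ha2.le
          (by linarith [map_sq_sum_nonneg ((1 :: l.erase a).map (a⁻¹ * ·))]), e3, e2]
        congr 1
        simp only [List.map_cons, List.sum_cons]
        field_simp
        ring
      rw [e4, mul_left_comm]
      exact mul_le_mul_of_nonneg_left ((mul_le_mul_of_nonneg_left h1 hC0).trans hs) (by positivity)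

/-- Khintchine's inequality in the Gaussian regime. -/
lemma gaussMoment_mul_rpow_le_signMean {p : ℝ} (hp : 9 / 5 ≤ p) (hp' : p < 2)
    (hC : gaussMoment p ≤ 2 ^ (p / 2 - 1)) (l : List ℝ) :
    gaussMoment p * (l.map (· ^ 2)).sum ^ (p / 2) ≤ signMean (fun a => |a| ^ p) 0 l := by
  have hp0 : 0 < p := by linarith
  by_cases h : ∀ a ∈ l, a = 0
  · have : (l.map (· ^ 2)).sum = 0 := by
      refine List.sum_eq_zero ?_
      simp only [List.mem_map]
      rintro _ ⟨a, ha, rfl⟩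
      rw [h a ha]; norm_num
    rw [this, zero_rpow (by linarith), mul_zero]
    have := signMean_mono (f := fun _ => 0) (g := fun a : ℝ => |a| ^ p) (fun a => by positivity) l 0
    rwa [signMean_const] at this
  · push Not at h
    obtain ⟨a, hal, ha0⟩ := h
    have ha2 : 0 < a ^ 2 := by positivity
    have hperm := List.perm_cons_erase hal
    rw [signMean_perm hperm, signMean_zero_cons (abs_neg_rpow p), signMean_eq_rescaled p ha0,
      (hperm.map _).sum_eq]
    have h1 := mul_profile_le_signMean hp hp' hC _ ((l.erase a).map (a⁻¹ * ·)) rfl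
    have hx := map_sq_sum_nonneg ((l.erase a).map (a⁻¹ * ·))
    have h2 := one_add_rpow_le_profile (q := p / 2) (by linarith) (by linarith) hx
    have e : ((a :: l.erase a).map (· ^ 2)).sum ^ (p / 2) = |a| ^ p *
        (1 + (((l.erase a).map (a⁻¹ * ·)).map (· ^ 2)).sum) ^ (p / 2) := by
      rw [abs_rpow_eq, ← mul_rpow ha2.le (by linarith), map_sq_sum_rescaled]
      congr 1
      simp only [List.map_cons, List.sum_cons]
      field_simp
    rw [e, mul_left_comm]
    exact mul_le_mul_of_nonneg_left
      ((mul_le_mul_of_nonneg_left h2 (gaussMoment_pos hp0).le).trans h1) (by positivity)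

/-! ### The critical exponent -/

lemma Gamma_three_half : Gamma (3 / 2) = √π / 2 := by
  rw [show (3 : ℝ) / 2 = 1 / 2 + 1 by norm_num, Gamma_add_one (by norm_num), Gamma_one_half_eq]
  ring

lemma Gamma_add_natCast {x : ℝ} (hx : 0 < x) (n : ℕ) :
    Gamma (x + n) = Gamma x * ∏ k ∈ Finset.range n, (x + k) := by
  induction n with
  | zero => simp
  | succ n ih =>
    rw [Finset.prod_range_succ, ← mul_assoc, ← ih, Nat.cast_succ, ← add_assoc,
      Gamma_add_one (by positivity), mul_comm]

lemma Gamma_add_le {y θ : ℝ} (hy : 0 < y) (hθ : 0 < θ) (hθ' : θ < 1) :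
    Gamma (y + θ) ≤ Gamma y * y ^ θ := by
  have h := Gamma_mul_add_mul_le_rpow_Gamma_mul_rpow_Gamma hy (by linarith : 0 < y + 1)
    (sub_pos.2 hθ') hθ (by ring)
  have hG := Gamma_pos_of_pos hy
  rw [Gamma_add_one hy.ne', mul_rpow hy.le hG.le, mul_left_comm, ← rpow_add hG] at h
  rw [show (1 - θ) * y + θ * (y + 1) = y + θ by ring, sub_add_cancel, rpow_one] at h
  linarith

lemma Gamma_three_half_lt : Gamma (3 / 2) < Gamma (7 / 5) := by
  have h := Gamma_add_le (y := 7 / 5 + (60 : ℕ)) (θ := 1 / 10) (by norm_num) (by norm_num)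
    (by norm_num)
  rw [show (7 : ℝ) / 5 + (60 : ℕ) + 1 / 10 = 3 / 2 + (60 : ℕ) by norm_num,
    Gamma_add_natCast (by norm_num), Gamma_add_natCast (by norm_num)] at h
  set P := ∏ k ∈ Finset.range 60, ((3 : ℝ) / 2 + k) with hP
  set Q := ∏ k ∈ Finset.range 60, ((7 : ℝ) / 5 + k) with hQ
  have hP0 : 0 < P := Finset.prod_pos fun k _ => by positivity
  have hQ0 : 0 < Q := Finset.prod_pos fun k _ => by positivity
  have hPQ : Q * (7 / 5 + (60 : ℕ)) ^ (1 / 10 : ℝ) < P := by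
    refine lt_of_pow_lt_pow_left₀ 10 hP0.le ?_
    rw [mul_pow, ← rpow_natCast (_ ^ (1 / 10 : ℝ)), ← rpow_mul (by positivity), hP, hQ]
    norm_num [Finset.prod_range_succ]
  have hG := Gamma_pos_of_pos (by norm_num : (0 : ℝ) < 7 / 5)
  have h1 : Gamma (3 / 2) * P < Gamma (7 / 5) * P := by
    refine h.trans_lt ?_
    rw [mul_assoc]
    exact mul_lt_mul_of_pos_left hPQ hG
  exact lt_of_mul_lt_mul_right h1 hP0.le

lemma eulerMascheroniConstant_lt : eulerMascheroniConstant < 2 - 2 * log 2 := by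
  have h := eulerMascheroniConstant_lt_eulerMascheroniSeq' 16
  have h1 := log_two_gt_d9
  have h2 : log (16 : ℕ) = 4 * log 2 := by
    rw [show ((16 : ℕ) : ℝ) = 2 ^ 4 by norm_num, log_pow]; norm_num
  simp only [eulerMascheroniSeq', h2] at h
  norm_num [harmonic, Finset.sum_range_succ] at h
  linarith

lemma hasDerivAt_Gamma_three_half :
    HasDerivAt Gamma (√π * (1 - eulerMascheroniConstant / 2 - log 2)) (3 / 2) := by
  have h1 : HasDerivAt (fun x : ℝ => (x - 1) * Gamma (x - 1))
      (√π * (1 - eulerMascheroniConstant / 2 - log 2)) (3 / 2) := by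
    have hd : HasDerivAt Gamma (-√π * (eulerMascheroniConstant + 2 * log 2)) ((3 : ℝ) / 2 - 1) := by
      convert! hasDerivAt_Gamma_one_half using 1; norm_num
    convert! ((hasDerivAt_id ((3 : ℝ) / 2)).sub_const 1).mul (hd.comp_sub_const _ 1) using 1
    rw [show (3 : ℝ) / 2 - 1 = 1 / 2 by norm_num, Gamma_one_half_eq]
    simp only [id]; ring
  refine h1.congr_of_eventuallyEq ?_
  filter_upwards [lt_mem_nhds (show (1 : ℝ) < 3 / 2 by norm_num)] with x hx
  rw [← Gamma_add_one (by linarith : (0 : ℝ) < x - 1).ne', sub_add_cancel]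

lemma differentiableAt_Gamma_pos {x : ℝ} (hx : 0 < x) : DifferentiableAt ℝ Gamma x :=
  differentiableAt_Gamma fun m => (by linarith [(Nat.cast_nonneg m : (0 : ℝ) ≤ m)] : -(m : ℝ) < x).ne'

lemma exists_Gamma_lt : ∃ x : ℝ, 1 < x ∧ x < 3 / 2 ∧ Gamma x < √π / 2 := by
  have hpos : 0 < √π * (1 - eulerMascheroniConstant / 2 - log 2) :=
    mul_pos (sqrt_pos.2 pi_pos) (by linarith [eulerMascheroniConstant_lt])
  have h := (hasDerivAt_iff_tendsto_slope.1 hasDerivAt_Gamma_three_half).mono_left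
    (nhdsWithin_mono (s := Set.Iio (3 / 2)) _ fun x hx => ne_of_lt hx)
  obtain ⟨x, hx, hx1, hx2⟩ := ((h.eventually (lt_mem_nhds hpos)).and
    (Ioo_mem_nhdsLT (show (1 : ℝ) < 3 / 2 by norm_num))).exists
  refine ⟨x, hx1, hx2, ?_⟩
  rw [slope_def_field, lt_div_iff_of_neg (by linarith), zero_mul, Gamma_three_half] at hx
  linarith

lemma sqrt_pi_div_two_lt_one : √π / 2 < 1 := by
  rw [div_lt_one two_pos, sqrt_lt' two_pos]
  linarith [pi_lt_four]

/-- The set of exponents defining the critical exponent. -/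
def criticalSet : Set ℝ := {p : ℝ | 1 < p ∧ p < 2 ∧ Gamma ((p + 1) / 2) = √π / 2}

lemma criticalSet_nonempty : criticalSet.Nonempty := by
  obtain ⟨x, hx1, hx2, hx⟩ := exists_Gamma_lt
  have hc : ContinuousOn Gamma (Set.Icc 1 x) := fun y hy =>
    (differentiableAt_Gamma_pos (by linarith [hy.1])).continuousAt.continuousWithinAt
  obtain ⟨y, ⟨hy1, hy2⟩, hy⟩ := intermediate_value_Ioo' hx1.le hc
    ⟨hx, by rw [Gamma_one]; exact sqrt_pi_div_two_lt_one⟩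
  refine ⟨2 * y - 1, by linarith, by linarith, ?_⟩
  rw [show (2 * y - 1 + 1) / 2 = y by ring, hy]

lemma Gamma_le_of_mem_criticalSet {p q : ℝ} (hp1 : 1 < p) (hp : Gamma ((p + 1) / 2) = √π / 2)
    (hpq : p ≤ q) (hq : q ≤ 2) : Gamma ((q + 1) / 2) ≤ √π / 2 := by
  have := convexOn_Gamma.le_max_of_mem_Icc (x := (p + 1) / 2) (y := 3 / 2) (z := (q + 1) / 2)
    (show (0 : ℝ) < (p + 1) / 2 by linarith) (show (0 : ℝ) < 3 / 2 by norm_num)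
    ⟨by linarith, by linarith⟩
  rwa [hp, Gamma_three_half, max_self] at this

lemma le_of_mem_criticalSet {p : ℝ} (hp : p ∈ criticalSet) : 9 / 5 ≤ p := by
  by_contra h
  have := Gamma_le_of_mem_criticalSet hp.1 hp.2.2 (not_le.1 h).le (by norm_num)
  rw [show ((9 : ℝ) / 5 + 1) / 2 = 7 / 5 by norm_num, ← Gamma_three_half] at this
  exact absurd this (not_le.2 Gamma_three_half_lt)

lemma nine_fifths_le_khintchineP0 : 9 / 5 ≤ khintchineP0 :=
  le_csInf criticalSet_nonempty fun _ hp => le_of_mem_criticalSet hp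

lemma khintchineP0_lt_two : khintchineP0 < 2 := by
  obtain ⟨p, hp⟩ := criticalSet_nonempty
  exact (csInf_le ⟨1, fun q hq => hq.1.le⟩ hp).trans_lt hp.2.1

lemma Gamma_khintchineP0 : Gamma ((khintchineP0 + 1) / 2) = √π / 2 := by
  have hcl : IsClosed (Set.Icc (1 : ℝ) 2 ∩ (fun p => Gamma ((p + 1) / 2)) ⁻¹' {√π / 2}) := by
    refine ContinuousOn.preimage_isClosed_of_isClosed (fun p hp => ?_) isClosed_Icc isClosed_singleton
    have h : ContinuousAt Gamma ((p + 1) / 2) :=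
      (differentiableAt_Gamma_pos (by linarith [hp.1])).continuousAt
    exact (h.comp (f := fun p : ℝ => (p + 1) / 2) (by fun_prop)).continuousWithinAt
  have h := csInf_mem_closure criticalSet_nonempty ⟨1, fun q hq => hq.1.le⟩
  have hsub : criticalSet ⊆
      Set.Icc (1 : ℝ) 2 ∩ (fun p => Gamma ((p + 1) / 2)) ⁻¹' {√π / 2} :=
    fun p hp => ⟨⟨hp.1.le, hp.2.1.le⟩, hp.2.2⟩
  exact (closure_minimal hsub hcl h).2

lemma gaussMoment_khintchineP0 : gaussMoment khintchineP0 = 2 ^ (khintchineP0 / 2 - 1) := by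
  rw [gaussMoment, Gamma_khintchineP0, rpow_sub_one two_ne_zero]
  have := sqrt_pos.2 pi_pos
  field_simp

lemma gaussMoment_le {p : ℝ} (hp : khintchineP0 ≤ p) (hp' : p ≤ 2) :
    gaussMoment p ≤ 2 ^ (p / 2 - 1) :=
  gaussMoment_le_iff.2 (Gamma_le_of_mem_criticalSet
    (by linarith [nine_fifths_le_khintchineP0]) Gamma_khintchineP0 hp hp')

/-! ### The Khintchine inequality with optimal constants -/

lemma signMean_add_mul {V : Type*} [AddCommGroup V] (a b : ℝ) (f g : V → ℝ) (l : List V) :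
    ∀ c, signMean (fun x => a * f x + b * g x) c l = a * signMean f c l + b * signMean g c l := by
  induction l with
  | nil => intro c; rfl
  | cons v l ih => intro c; simp only [signMean, ih]; ring

lemma signMean_sq (l : List ℝ) :
    ∀ c, signMean (fun a => |a| ^ (2 : ℝ)) c l = c ^ 2 + (l.map (· ^ 2)).sum := by
  induction l with
  | nil => intro c; simp [signMean]
  | cons v l ih => intro c; simp only [signMean, ih, List.map_cons, List.sum_cons]; ring

lemma two_rpow_mul_le_signMean {r : ℝ} (hr : 1 < r) (hr' : r ≤ khintchineP0) (l : List ℝ) :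
    2 ^ (r / 2 - 1) * (l.map (· ^ 2)).sum ^ (r / 2) ≤ signMean (fun a => |a| ^ r) 0 l := by
  have hp2 := khintchineP0_lt_two
  have key := gaussMoment_mul_rpow_le_signMean nine_fifths_le_khintchineP0 hp2
    (gaussMoment_le le_rfl hp2.le) l
  have hS := signMean_sq l 0
  set S := (l.map (· ^ 2)).sum with hSdef
  set p := khintchineP0
  rw [gaussMoment_khintchineP0] at key
  rcases (map_sq_sum_nonneg l).eq_or_lt with h0 | h0
  · rw [← hSdef] at h0
    rw [← h0, zero_rpow (by linarith), mul_zero]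
    exact (signMean_const 0 l 0).ge.trans (signMean_mono (fun x => by positivity) l 0)
  rw [← hSdef] at h0
  set K : ℝ := 2 ^ (r / 2 - 1) * S ^ (r / 2) with hK
  have hK0 : 0 < K := by positivity
  set θ : ℝ := (2 - p) / (2 - r) with hθ
  have hθr : θ * (2 - r) = 2 - p := div_mul_cancel₀ _ (by linarith)
  have hθ0 : 0 < θ := div_pos (by linarith) (by linarith)
  have hθ1 : θ ≤ 1 := (div_le_one (by linarith)).2 (by linarith)
  have hE : K ^ θ * S ^ (1 - θ) = 2 ^ (p / 2 - 1) * S ^ (p / 2) := by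
    rw [hK, mul_rpow (by positivity) (by positivity), ← rpow_mul two_pos.le, ← rpow_mul h0.le,
      mul_assoc, ← rpow_add h0]
    congr 2 <;> linarith
  have hpt : ∀ x : ℝ, |x| ^ p ≤
      K ^ θ * S ^ (1 - θ) * (θ / K) * |x| ^ r +
        K ^ θ * S ^ (1 - θ) * ((1 - θ) / S) * |x| ^ (2 : ℝ) := fun x => by
    have h := geom_mean_le_arith_mean2_weighted hθ0.le (sub_nonneg.2 hθ1)
      (show 0 ≤ |x| ^ r / K by positivity) (show 0 ≤ |x| ^ (2 : ℝ) / S by positivity) (by ring)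
    rw [div_rpow (by positivity) hK0.le, div_rpow (by positivity) h0.le, ← rpow_mul (abs_nonneg _),
      ← rpow_mul (abs_nonneg _), div_mul_div_comm, ← rpow_add' (abs_nonneg _),
      show r * θ + 2 * (1 - θ) = p by linarith, div_le_iff₀ (by positivity)] at h
    · refine h.trans_eq ?_
      ring
    · linarith [nine_fifths_le_khintchineP0]
  have h := signMean_mono hpt l 0
  rw [signMean_add_mul, hS, hE] at h
  have h2 := key.trans h
  set M := signMean (fun a => |a| ^ r) 0 l
  have hD : 0 < (2 : ℝ) ^ (p / 2 - 1) * S ^ (p / 2) := by positivity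
  set D := (2 : ℝ) ^ (p / 2 - 1) * S ^ (p / 2)
  have h3 : D * θ * K ≤ D * θ * M := by
    have e : D * (θ / K) * M + D * ((1 - θ) / S) * (0 ^ 2 + S) = D * θ * M / K + D * (1 - θ) := by
      field_simp; ring
    rw [e] at h2
    rw [← le_div_iff₀ hK0]
    linarith
  exact le_of_mul_le_mul_left h3 (by positivity)

lemma khintchineA_nonneg {r : ℝ} (hr : 1 < r) : 0 ≤ khintchineA r := by
  have := Gamma_pos_of_pos (by linarith : 0 < (r + 1) / 2)
  unfold khintchineA
  split_ifs <;> positivity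

/-- The Khintchine inequality with the optimal constant, for exponents in `(1, 2]`. -/
theorem rpow_le_khintchineA_rpow_mul_signMean {r : ℝ} (hr : 1 < r) (hr' : r ≤ 2) (l : List ℝ) :
    (l.map (· ^ 2)).sum ^ (r / 2) ≤ khintchineA r ^ r * signMean (fun a => |a| ^ r) 0 l := by
  rcases le_or_gt r khintchineP0 with h | h
  · have := two_rpow_mul_le_signMean hr h l
    rw [khintchineA, if_pos h, ← rpow_mul two_pos.le,
      show (1 / r - 1 / 2) * r = -(r / 2 - 1) by field_simp; ring, rpow_neg two_pos.le]
    rwa [inv_mul_eq_div, le_div_iff₀' (by positivity)]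
  · rcases hr'.eq_or_lt with rfl | h2
    · rw [khintchineA, if_neg h.not_ge, if_neg (lt_irrefl _), one_rpow, one_mul, signMean_sq]
      norm_num
    · have hg := gaussMoment_mul_rpow_le_signMean (nine_fifths_le_khintchineP0.trans h.le) h2
        (gaussMoment_le h.le hr') l
      have hG := Gamma_pos_of_pos (by linarith : 0 < (r + 1) / 2)
      have e : khintchineA r ^ r = (gaussMoment r)⁻¹ := by
        rw [khintchineA, if_neg h.not_ge, if_pos h2, mul_rpow (by positivity) (by positivity),
          ← rpow_mul (by positivity), show -(1 / r) * r = -1 by field_simp, rpow_neg_one,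
          one_div, inv_rpow (by positivity), sqrt_eq_rpow, ← rpow_mul two_pos.le, ← mul_inv,
          gaussMoment, show 1 / 2 * r = r / 2 by ring, ← mul_div_assoc]
      rwa [e, inv_mul_eq_div, le_div_iff₀' (gaussMoment_pos (by linarith))]

/-! ### The mixed inequality -/

lemma signMean_map {V W : Type*} [AddCommGroup V] [AddCommGroup W] (φ : V →+ W) (f : W → ℝ)
    (l : List V) : ∀ c, signMean (fun v => f (φ v)) c l = signMean f (φ c) (l.map φ) := by
  induction l with
  | nil => intro c; rfl
  | cons v l ih => intro c; simp only [signMean, List.map_cons, ih, map_add, map_sub]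

lemma signMean_sum {V ι : Type*} [AddCommGroup V] (s : Finset ι) (f : ι → V → ℝ) (l : List V) :
    ∀ c, signMean (fun v => ∑ i ∈ s, f i v) c l = ∑ i ∈ s, signMean (f i) c l := by
  induction l with
  | nil => intro c; rfl
  | cons v l ih => intro c; simp only [signMean, ih, ← Finset.sum_add_distrib, Finset.sum_div]

lemma exists_signMean_le {V : Type*} [AddCommGroup V] [Module ℝ V] (f : V → ℝ) {n : ℕ} :
    ∀ (a : Fin n → V) (c : V), ∃ y : Fin n → ℝ, (∀ j, |y j| ≤ 1) ∧
      signMean f c (List.ofFn a) ≤ f (c + ∑ j, y j • a j) := by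
  induction n with
  | zero => intro a c; exact ⟨0, fun j => j.elim0, by simp [signMean]⟩
  | succ n ih =>
    intro a c
    have step : ∀ s : ℝ, |s| ≤ 1 →
        signMean f c (List.ofFn a) ≤ signMean f (c + s • a 0) (List.ofFn fun j => a j.succ) →
        ∃ y : Fin (n + 1) → ℝ, (∀ j, |y j| ≤ 1) ∧
          signMean f c (List.ofFn a) ≤ f (c + ∑ j, y j • a j) := fun s hs h => by
      obtain ⟨y, hy, hle⟩ := ih (fun j => a j.succ) (c + s • a 0)
      refine ⟨Fin.cons s y, Fin.cases hs hy, h.trans ?_⟩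
      simpa [Fin.sum_univ_succ, add_assoc] using hle
    have e : signMean f c (List.ofFn a) =
        (signMean f (c + a 0) (List.ofFn fun j => a j.succ) +
          signMean f (c - a 0) (List.ofFn fun j => a j.succ)) / 2 := by
      rw [List.ofFn_succ, signMean]
    rcases le_total (signMean f (c + a 0) (List.ofFn fun j => a j.succ))
      (signMean f (c - a 0) (List.ofFn fun j => a j.succ)) with h | h
    · refine step (-1) (by simp) ?_
      rw [e, neg_one_smul, ← sub_eq_add_neg]; linarith
    · refine step 1 (by simp) ?_
      rw [e, one_smul]; linarith

lemma minkowski_sum {ι κ : Type*} [Fintype κ] {q : ℝ} (hq : 1 ≤ q) (b : ι → κ → ℝ)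
    (hb : ∀ i j, 0 ≤ b i j) (s : Finset ι) :
    (∑ j, (∑ i ∈ s, b i j) ^ q) ^ (1 / q) ≤ ∑ i ∈ s, (∑ j, b i j ^ q) ^ (1 / q) := by
  classical
  induction s using Finset.induction_on with
  | empty => simp [zero_rpow (by linarith : q ≠ 0), zero_rpow (inv_pos.2 (by linarith : 0 < q)).ne']
  | insert i s hi ih =>
    simp only [Finset.sum_insert hi]
    exact (Lp_add_le_of_nonneg Finset.univ hq (fun j _ => hb i j)
      (fun j _ => Finset.sum_nonneg fun k _ => hb k j)).trans (by gcongr)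

section Bilinear

variable {N n : ℕ} (T : (Fin N → ℝ) →ₗ[ℝ] (Fin n → ℝ) →ₗ[ℝ] ℝ)

lemma linear_apply_eq_sum {k : ℕ} (f : (Fin k → ℝ) →ₗ[ℝ] ℝ) (x : Fin k → ℝ) :
    f x = ∑ i, x i * f (Pi.single i 1) := by
  conv_lhs => rw [← Finset.univ_sum_single x, map_sum]
  refine Finset.sum_congr rfl fun i _ => ?_
  rw [← smul_eq_mul, ← map_smul, ← Pi.single_smul, smul_eq_mul, mul_one]

lemma bilin_apply_left (x : Fin N → ℝ) (y : Fin n → ℝ) :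
    T x y = ∑ i, x i * T (Pi.single i 1) y :=
  linear_apply_eq_sum (T.flip y) x

lemma abs_apply_le_bilinOpNorm {p : ℝ} (hp : 0 < p) {x : Fin N → ℝ} {y : Fin n → ℝ}
    (hx : ∑ i, |x i| ^ p ≤ 1) (hy : ∀ j, |y j| ≤ 1) : |T x y| ≤ bilinOpNorm p T := by
  refine le_csSup ⟨∑ i, ∑ j, |T (Pi.single i 1) (Pi.single j 1)|, ?_⟩ ⟨x, y, ?_, ?_, rfl⟩
  · rintro c ⟨x, y, hx, hy, rfl⟩
    have hx1 : ∀ i, |x i| ≤ 1 := fun i => by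
      refine le_trans ?_ hx
      calc |x i| = (|x i| ^ p) ^ (1 / p) := by
            rw [← rpow_mul (abs_nonneg _), mul_one_div_cancel hp.ne', rpow_one]
        _ ≤ _ := rpow_le_rpow (by positivity)
            (Finset.single_le_sum (f := fun i => |x i| ^ p) (fun j _ => by positivity)
              (Finset.mem_univ i)) (by positivity)
    have hy1 : ∀ j, |y j| ≤ 1 := fun j =>
      (le_ciSup (f := fun j => |y j|) (Set.finite_range _).bddAbove j).trans hy
    rw [bilin_apply_left]
    refine (Finset.abs_sum_le_sum_abs _ _).trans (Finset.sum_le_sum fun i _ => ?_)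
    rw [abs_mul]
    refine (mul_le_of_le_one_left (abs_nonneg _) (hx1 i)).trans ?_
    rw [linear_apply_eq_sum]
    refine (Finset.abs_sum_le_sum_abs _ _).trans (Finset.sum_le_sum fun j _ => ?_)
    rw [abs_mul]
    exact mul_le_of_le_one_left (abs_nonneg _) (hy1 j)
  · exact rpow_le_one (Finset.sum_nonneg fun i _ => by positivity) hx (by positivity)
  · exact Real.iSup_le hy zero_le_one

lemma bilinOpNorm_nonneg (p : ℝ) : 0 ≤ bilinOpNorm p T := by
  refine Real.sSup_nonneg ?_
  rintro c ⟨x, y, -, -, rfl⟩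
  exact abs_nonneg _

lemma sum_abs_rpow_le_bilinOpNorm {p r : ℝ} (hpr : p.HolderConjugate r) {y : Fin n → ℝ}
    (hy : ∀ j, |y j| ≤ 1) :
    ∑ i, |T (Pi.single i 1) y| ^ r ≤ bilinOpNorm p T ^ r := by
  have hp := hpr.pos
  have hr := hpr.symm.pos
  set z : Fin N → ℝ := fun i => T (Pi.single i 1) y with hz
  change ∑ i, |z i| ^ r ≤ _
  set S := ∑ i, |z i| ^ r with hS
  rcases (show 0 ≤ S from Finset.sum_nonneg fun i _ => by positivity).eq_or_lt with h0 | h0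
  · rw [← h0]; exact rpow_nonneg (bilinOpNorm_nonneg T p) r
  have hzr : ∀ i, |z i| ^ (r - 1) * |z i| = |z i| ^ r := fun i => by
    rcases (abs_nonneg (z i)).eq_or_lt with h | h
    · rw [← h, mul_zero, zero_rpow hr.ne']
    · rw [← rpow_add_one h.ne', sub_add_cancel]
  have hrp : (r - 1) * p = r := hpr.symm.sub_one_mul_conj
  have h := abs_apply_le_bilinOpNorm T hp (y := y)
    (x := fun i => SignType.sign (z i) * |z i| ^ (r - 1) / S ^ (1 / p)) ?_ hy
  · have e : T (fun i => SignType.sign (z i) * |z i| ^ (r - 1) / S ^ (1 / p)) y = S ^ (1 / r) := by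
      rw [bilin_apply_left]
      have : ∀ i, SignType.sign (z i) * |z i| ^ (r - 1) / S ^ (1 / p) * z i =
          |z i| ^ r / S ^ (1 / p) := fun i => by
        rw [← hzr, div_mul_eq_mul_div, mul_right_comm, sign_mul_self, mul_comm]
      rw [Finset.sum_congr rfl fun i _ => this i, ← Finset.sum_div, ← hS]
      have h1 : 1 / r = 1 - 1 / p := by
        have := hpr.inv_add_inv_eq_one
        rw [one_div, one_div]; linarith
      rw [h1, rpow_sub h0, rpow_one]
    rw [e, abs_of_nonneg (by positivity)] at h
    calc S = (S ^ (1 / r)) ^ r := by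
          rw [← rpow_mul h0.le, one_div_mul_cancel hr.ne', rpow_one]
      _ ≤ _ := rpow_le_rpow (by positivity) h hr.le
  · have : ∀ i, |SignType.sign (z i) * |z i| ^ (r - 1) / S ^ (1 / p)| ^ p ≤ |z i| ^ r / S :=
      fun i => by
      have hs : |((SignType.sign (z i) : SignType) : ℝ)| ≤ 1 := by
        rcases SignType.sign (z i) with _ | _ | _ <;> simp
      rw [abs_div, abs_mul, abs_of_nonneg (rpow_nonneg (abs_nonneg (z i)) _),
        abs_of_nonneg (rpow_nonneg h0.le _), div_rpow (by positivity) (by positivity),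
        ← rpow_mul h0.le, one_div_mul_cancel hp.ne', rpow_one]
      gcongr
      rw [← hrp, rpow_mul (abs_nonneg _), hrp]
      exact rpow_le_rpow (by positivity) (mul_le_of_le_one_left (by positivity) hs) hp.le
    refine (Finset.sum_le_sum fun i _ => this i).trans ?_
    rw [← Finset.sum_div, ← hS, div_self h0.ne']

/-- The mixed inequality in terms of the exponent conjugate to `p`. -/
theorem sum_rpow_le_khintchineA_mul_bilinOpNorm {p r : ℝ} (hpr : p.HolderConjugate r)
    (hr2 : r ≤ 2) :
    (∑ j, (∑ i, |T (Pi.single i 1) (Pi.single j 1)| ^ r) ^ (2 / r)) ^ ((1 : ℝ) / 2) ≤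
      khintchineA r * bilinOpNorm p T := by
  have hr1 : 1 < r := hpr.symm.lt
  have hr : 0 < r := hpr.symm.pos
  have hA := khintchineA_nonneg hr1
  have hN := bilinOpNorm_nonneg T p
  set a : Fin N → Fin n → ℝ := fun i j => T (Pi.single i 1) (Pi.single j 1) with ha
  set L := ∑ j, (∑ i, |a i j| ^ r) ^ (2 / r) with hL
  have hL0 : 0 ≤ L := Finset.sum_nonneg fun j _ => by positivity
  have hrow : ∀ i, (∑ j, (|a i j| ^ r) ^ (2 / r)) ^ (1 / (2 / r)) ≤
      khintchineA r ^ r *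
        signMean (fun v : Fin N → ℝ => |v i| ^ r) 0 (List.ofFn fun j i => a i j) := fun i => by
    have h := rpow_le_khintchineA_rpow_mul_signMean hr1 hr2 (List.ofFn (a i))
    rw [List.map_ofFn, List.sum_ofFn] at h
    have e1 : ∀ j, (|a i j| ^ r) ^ (2 / r) = a i j ^ 2 := fun j => by
      rw [← rpow_mul (abs_nonneg _), mul_div_cancel₀ _ hr.ne', rpow_two, sq_abs]
    have e2 := signMean_map (Pi.evalAddMonoidHom (fun _ : Fin N => ℝ) i) (fun x : ℝ => |x| ^ r)
      (List.ofFn fun j i => a i j) 0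
    rw [List.map_ofFn, map_zero] at e2
    rw [Finset.sum_congr rfl fun j _ => e1 j, one_div_div]
    exact h.trans_eq (congrArg _ e2.symm)
  have hmain : L ^ (r / 2) ≤ (khintchineA r * bilinOpNorm p T) ^ r := by
    have h1 := minkowski_sum (q := 2 / r) ((one_le_div hr).2 hr2) (fun i j => |a i j| ^ r)
      (fun i j => by positivity) Finset.univ
    obtain ⟨y, hy, hle⟩ := exists_signMean_le (fun v : Fin N → ℝ => ∑ i, |v i| ^ r)
      (fun j i => a i j) 0
    have h3 := sum_abs_rpow_le_bilinOpNorm T hpr hy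
    calc L ^ (r / 2) = L ^ (1 / (2 / r)) := by rw [one_div_div]
      _ ≤ _ := h1.trans (Finset.sum_le_sum fun i _ => hrow i)
      _ = khintchineA r ^ r * signMean (fun v : Fin N → ℝ => ∑ i, |v i| ^ r) 0
          (List.ofFn fun j i => a i j) := by rw [signMean_sum, Finset.mul_sum]
      _ ≤ khintchineA r ^ r * bilinOpNorm p T ^ r := by
        refine mul_le_mul_of_nonneg_left (hle.trans (le_of_eq_of_le ?_ h3)) (by positivity)
        refine Finset.sum_congr rfl fun i _ => ?_
        rw [linear_apply_eq_sum]
        simp [ha]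
      _ = _ := (mul_rpow hA hN).symm
  calc L ^ ((1 : ℝ) / 2) = (L ^ (r / 2)) ^ (1 / r) := by
        rw [← rpow_mul hL0]; congr 1; field_simp
    _ ≤ ((khintchineA r * bilinOpNorm p T) ^ r) ^ (1 / r) :=
        rpow_le_rpow (by positivity) hmain (by positivity)
    _ = _ := by
        rw [← rpow_mul (mul_nonneg hA hN), mul_one_div_cancel hr.ne', rpow_one]

end Bilinear

end Khintchine

/-- Mixed `(ℓ₂, ℓ_{p/(p-1)})`-Littlewood inequality with constant `A_{p/(p-1)}`. -/
theorem mixed_littlewood_bilinear_swapped (p : ℝ) (hp : 2 ≤ p) (n : ℕ)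
    (T : (Fin n → ℝ) →ₗ[ℝ] (Fin n → ℝ) →ₗ[ℝ] ℝ) :
    (∑ j : Fin n, (∑ i : Fin n, |T (Pi.single i 1) (Pi.single j 1)| ^ (p / (p - 1)))
        ^ (2 * (p - 1) / p)) ^ ((1 : ℝ) / 2)
      ≤ khintchineA (p / (p - 1)) * bilinOpNorm p T := by
  have h : p.HolderConjugate (p / (p - 1)) := HolderConjugate.conjExponent (by linarith)
  have h2 : p / (p - 1) ≤ 2 := by rw [div_le_iff₀ (by linarith)]; linarith
  have := Khintchine.sum_rpow_le_khintchineA_mul_bilinOpNorm T h h2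
  rwa [div_div_eq_mul_div] at this
end

section
/- Let p ∈ [2, ∞) be a real number and let C ≥ 0 be a constant such that for every n ∈ ℕ and every bilinear form T : ℝⁿ × ℝⁿ → ℝ one has (∑_{i=1}^{n} (∑_{j=1}^{n} |T(e_i,e_j)|²)^{(1/2)·(p/(p−1))})^{(p−1)/p} ≤ C · ‖T‖_{p,∞}. Then C ≥ A_{p/(p−1)}; that is, the optimal constant in the mixed (ℓ_{p/(p−1)}, ℓ₂)-Littlewood inequality is exactly A_{p/(p−1)}. -/
open MeasureTheory Real Filter

/-- A mixed Littlewood inequality for square forms transfers to matrices indexed by arbitrary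
finite types, with `‖T‖` replaced by any bound `M` on the `ℓ_∞ → ℓ_{p/(p-1)}` norm to the power
`p/(p-1)`. -/
theorem sum_rpow_le_of_mixed_littlewood {p : ℝ} (hp : 2 ≤ p) {C : ℝ} (hC : 0 ≤ C)
    (h : ∀ (n : ℕ) (T : (Fin n → ℝ) →ₗ[ℝ] (Fin n → ℝ) →ₗ[ℝ] ℝ),
      (∑ i : Fin n, (∑ j : Fin n, |T (Pi.single i 1) (Pi.single j 1)| ^ (2 : ℝ))
          ^ ((1 / 2) * (p / (p - 1)))) ^ ((p - 1) / p)
        ≤ C * bilinOpNorm p T)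
    {ι κ : Type*} [Fintype ι] [Fintype κ] (A : ι → κ → ℝ) {M : ℝ} (hM0 : 0 ≤ M)
    (hM : ∀ y : κ → ℝ, (∀ j, |y j| ≤ 1) → ∑ i, |∑ j, A i j * y j| ^ (p / (p - 1)) ≤ M) :
    ∑ i, (∑ j, A i j ^ 2) ^ ((1 / 2) * (p / (p - 1))) ≤ C ^ (p / (p - 1)) * M := by
  classical
  set q := p / (p - 1) with hq
  have hpq : p.HolderConjugate q := .conjExponent (by linarith)
  have hq0 : 0 < q := hpq.symm.pos
  have hinv : (p - 1) / p = 1 / q := by rw [hq, one_div_div]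
  let e := Fintype.equivFin (ι ⊕ κ)
  let B : Matrix (Fin (Fintype.card (ι ⊕ κ))) (Fin (Fintype.card (ι ⊕ κ))) ℝ :=
    (Matrix.fromBlocks 0 (Matrix.of A) 0 0).submatrix e.symm e.symm
  let T := Matrix.toLinearMap₂' ℝ (S₁ := ℝ) (S₂ := ℝ) B
  have hT (x y : Fin (Fintype.card (ι ⊕ κ)) → ℝ) :
      T x y = ∑ i, x (e (.inl i)) * ∑ j, A i j * y (e (.inr j)) := by
    simp only [T, B, Matrix.toLinearMap₂'_apply]
    rw [← e.sum_comp, Fintype.sum_sum_type]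
    simp only [← e.sum_comp, Fintype.sum_sum_type]
    simp [Finset.mul_sum, mul_left_comm, mul_comm]
  have hnorm : bilinOpNorm p T ≤ M ^ (1 / q) := by
    refine csSup_le ⟨_, 0, 0, ?_, ?_, rfl⟩ ?_
    · simp [_root_.lpNorm, Real.zero_rpow hpq.ne_zero, Real.zero_rpow (inv_ne_zero hpq.ne_zero)]
    · simp [linfNorm, Real.iSup_const_zero]
    rintro _ ⟨x, y, hx, hy, rfl⟩
    have hy' j : |y j| ≤ 1 :=
      (le_ciSup (f := fun i ↦ |y i|) (Set.finite_range _).bddAbove j).trans hy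
    have hx' : ∑ i : ι, |x (e (.inl i))| ^ p ≤ 1 := by
      have h1 : ∑ i, |x i| ^ p ≤ 1 := by
        by_contra! hlt
        exact absurd hx (not_le.2 (Real.one_lt_rpow hlt (one_div_pos.2 hpq.pos)))
      rw [← e.sum_comp, Fintype.sum_sum_type] at h1
      have h2 : 0 ≤ ∑ j : κ, |x (e (.inr j))| ^ p := by positivity
      linarith
    rw [hT]
    refine (Finset.abs_sum_le_sum_abs _ _).trans ?_
    simp only [abs_mul]
    refine (Real.inner_le_Lp_mul_Lq _ _ _ hpq).trans ?_
    simp only [abs_abs]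
    calc _ ≤ 1 * M ^ (1 / q) := by
          gcongr
          · exact Real.rpow_le_one (by positivity) hx' (one_div_pos.2 hpq.pos).le
          · exact hM _ fun j ↦ hy' _
      _ = _ := one_mul _
  have key := (h _ T).trans (mul_le_mul_of_nonneg_left hnorm hC)
  have hL : ∑ i, (∑ j, |T (Pi.single i 1) (Pi.single j 1)| ^ (2 : ℝ)) ^ ((1 / 2) * q)
      = ∑ i, (∑ j, A i j ^ 2) ^ ((1 / 2) * q) := by
    have hne : 1 / 2 * q ≠ 0 := by positivity
    rw [← e.sum_comp, Fintype.sum_sum_type]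
    simp only [← e.sum_comp, Fintype.sum_sum_type, hT]
    simp [-one_div, Pi.single_apply, Real.zero_rpow hne]
  rw [hL, hinv] at key
  have hS : 0 ≤ ∑ i, (∑ j, A i j ^ 2) ^ ((1 / 2) * q) := by positivity
  have := Real.rpow_le_rpow (by positivity) key hq0.le
  rwa [Real.mul_rpow hC (by positivity), ← Real.rpow_mul hS, ← Real.rpow_mul hM0,
    one_div_mul_cancel hq0.ne', Real.rpow_one, Real.rpow_one] at this

theorem convexOn_abs_rpow {q : ℝ} (hq : 1 ≤ q) : ConvexOn ℝ Set.univ fun x : ℝ ↦ |x| ^ q := by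
  refine ⟨convex_univ, fun x _ y _ a b ha hb hab ↦ ?_⟩
  calc |a • x + b • y| ^ q ≤ (a • |x| + b • |y|) ^ q := by
        gcongr
        refine (abs_add_le _ _).trans_eq ?_
        simp [abs_mul, abs_of_nonneg ha, abs_of_nonneg hb]
    _ ≤ _ := (convexOn_rpow hq).2 (abs_nonneg x) (abs_nonneg y) ha hb hab

/-- Among coefficient vectors in the unit cube, the `q`-th moment of a Rademacher sum is maximal
for the all-ones vector. -/
theorem sum_abs_signed_sum_rpow_le {q : ℝ} (hq : 1 ≤ q) {n : ℕ} (y : Fin n → ℝ)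
    (hy : ∀ j, |y j| ≤ 1) :
    ∑ ε : Fin n → ℤˣ, |∑ j, ((ε j : ℤ) : ℝ) * y j| ^ q
      ≤ ∑ ε : Fin n → ℤˣ, |∑ j, ((ε j : ℤ) : ℝ)| ^ q := by
  have hconv : ConvexOn ℝ Set.univ fun y : Fin n → ℝ ↦
      ∑ ε : Fin n → ℤˣ, |∑ j, ((ε j : ℤ) : ℝ) * y j| ^ q := by
    simp_rw [← Finset.sum_apply _ _ fun (ε : Fin n → ℤˣ) (y : Fin n → ℝ) ↦
      |∑ j, ((ε j : ℤ) : ℝ) * y j| ^ q]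
    refine Finset.sum_induction _ (ConvexOn ℝ Set.univ) (fun _ _ ↦ ConvexOn.add)
      (convexOn_const 0 convex_univ) fun ε _ ↦ ?_
    have := (convexOn_abs_rpow hq).comp_linearMap
      (Fintype.linearCombination ℝ fun j ↦ ((ε j : ℤ) : ℝ))
    simpa [Function.comp_def, Fintype.linearCombination_apply, mul_comm] using this
  have hmem : y ∈ convexHull ℝ (Set.univ.pi fun _ : Fin n ↦ ({-1, 1} : Set ℝ)) := by
    rw [convexHull_pi]
    intro j _
    rw [convexHull_pair, segment_eq_Icc (by norm_num)]
    exact abs_le.1 (hy j)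
  obtain ⟨z, hz, hyz⟩ := hconv.exists_ge_of_mem_convexHull (Set.subset_univ _) hmem
  have hz' : ∃ η : Fin n → ℤˣ, ∀ j, z j = ((η j : ℤ) : ℝ) := by
    suffices ∀ j, ∃ u : ℤˣ, z j = ((u : ℤ) : ℝ) from Classical.skolem.1 this
    intro j
    rcases hz j trivial with h | h
    · exact ⟨-1, by simp [h]⟩
    · exact ⟨1, by simpa using h⟩
  obtain ⟨η, hη⟩ := hz'
  refine hyz.trans_eq ?_
  rw [← Equiv.sum_comp (Equiv.mulRight η) fun ε : Fin n → ℤˣ ↦ |∑ j, ((ε j : ℤ) : ℝ)| ^ q]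
  simp [hη]

theorem sum_prod_units_int {R : Type*} [CommSemiring R] (g : ℤˣ → R) (n : ℕ) :
    ∑ ε : Fin n → ℤˣ, ∏ j, g (ε j) = (g 1 + g (-1)) ^ n := by
  have h := Finset.prod_univ_sum (fun _ : Fin n ↦ (Finset.univ : Finset ℤˣ)) fun _ ↦ g
  rw [Fintype.piFinset_univ] at h
  rw [← h]
  simp [UnitsInt.univ]

/-- Testing a mixed Littlewood inequality on the matrix of all sign vectors of length `n`. -/
theorem two_pow_mul_rpow_le_of_mixed_littlewood {p : ℝ} (hp : 2 ≤ p) {C : ℝ} (hC : 0 ≤ C)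
    (h : ∀ (n : ℕ) (T : (Fin n → ℝ) →ₗ[ℝ] (Fin n → ℝ) →ₗ[ℝ] ℝ),
      (∑ i : Fin n, (∑ j : Fin n, |T (Pi.single i 1) (Pi.single j 1)| ^ (2 : ℝ))
          ^ ((1 / 2) * (p / (p - 1)))) ^ ((p - 1) / p)
        ≤ C * bilinOpNorm p T) (n : ℕ) :
    2 ^ n * (n : ℝ) ^ ((1 / 2) * (p / (p - 1)))
      ≤ C ^ (p / (p - 1)) * ∑ ε : Fin n → ℤˣ, |∑ j, ((ε j : ℤ) : ℝ)| ^ (p / (p - 1)) := by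
  have hq : 1 ≤ p / (p - 1) := by rw [le_div_iff₀] <;> linarith
  have := sum_rpow_le_of_mixed_littlewood hp hC h
    (fun (ε : Fin n → ℤˣ) j ↦ ((ε j : ℤ) : ℝ)) (by positivity)
    (fun y hy ↦ sum_abs_signed_sum_rpow_le hq y hy)
  have hsq (u : ℤˣ) : ((u : ℤ) : ℝ) ^ 2 = 1 := by
    rcases Int.units_eq_one_or u with rfl | rfl <;> simp
  simpa [hsq] using this
/-- The law of the normalized Rademacher sum `n^{-1/2} ∑_{j<n} ε_j`. -/
noncomputable def signSumLaw (n : ℕ) : ProbabilityMeasure ℝ :=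
  ⟨((2 : ENNReal) ^ n)⁻¹ • ∑ ε : Fin n → ℤˣ, Measure.dirac ((√n)⁻¹ * ∑ j, ((ε j : ℤ) : ℝ)), ⟨by
    simp [ENNReal.inv_mul_cancel]⟩⟩

theorem integrable_signSumLaw (n : ℕ) (f : ℝ → ℝ) :
    Integrable f (signSumLaw n : Measure ℝ) := by
  refine Integrable.smul_measure ?_ (by simp)
  exact integrable_finsetSum_measure.2 fun ε _ ↦ integrable_dirac (by simp)

theorem integral_signSumLaw {E : Type*} [NormedAddCommGroup E] [NormedSpace ℝ E] [CompleteSpace E]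
    (n : ℕ) (f : ℝ → E) :
    ∫ x, f x ∂(signSumLaw n : Measure ℝ)
      = (2 ^ n : ℝ)⁻¹ • ∑ ε : Fin n → ℤˣ, f ((√n)⁻¹ * ∑ j, ((ε j : ℤ) : ℝ)) := by
  simp only [signSumLaw, ProbabilityMeasure.coe_mk]
  rw [integral_smul_measure, integral_finsetSum_measure fun ε _ ↦ integrable_dirac (by simp)]
  simp

theorem charFun_signSumLaw (n : ℕ) (t : ℝ) :
    charFun (signSumLaw n : Measure ℝ) t = Complex.cos ((√n)⁻¹ * t : ℝ) ^ n := by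
  have hprod (ε : Fin n → ℤˣ) :
      Complex.exp (t * (((√n)⁻¹ * ∑ j, ((ε j : ℤ) : ℝ) : ℝ) : ℂ) * Complex.I)
        = ∏ j, Complex.exp (((√n)⁻¹ * t : ℝ) * ((ε j : ℤ) : ℂ) * Complex.I) := by
    rw [← Complex.exp_sum]
    push_cast
    simp only [Finset.mul_sum, Finset.sum_mul]
    congr 1
    exact Finset.sum_congr rfl fun _ _ ↦ by ring
  rw [charFun_apply_real, integral_signSumLaw]
  simp only [hprod]
  rw [sum_prod_units_int fun u : ℤˣ ↦ Complex.exp (((√n)⁻¹ * t : ℝ) * ((u : ℤ) : ℂ) * Complex.I),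
    Complex.cos, div_pow, Complex.real_smul, div_eq_inv_mul]
  simp

theorem tendsto_signSumLaw :
    Tendsto signSumLaw atTop (nhds ⟨ProbabilityTheory.gaussianReal 0 1, inferInstance⟩) := by
  refine ProbabilityMeasure.tendsto_iff_tendsto_charFun.2 fun t ↦ ?_
  have hone (g : ℝ → ℝ) : ∫ x, g x ∂(signSumLaw 1 : Measure ℝ) = 2⁻¹ * (g 1 + g (-1)) := by
    have := sum_prod_units_int (fun u : ℤˣ ↦ g ((u : ℤ) : ℝ)) 1
    simp only [Fin.prod_univ_one] at this
    rw [integral_signSumLaw]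
    simp [this]
  have key := ProbabilityTheory.tendsto_charFun_inv_sqrt_mul_pow
    (P := (signSumLaw 1 : Measure ℝ)) (X := id) aemeasurable_id
    (by simp [hone]) (by simp [hone]; norm_num) t
  simp only [Measure.map_id, charFun_signSumLaw] at key
  simpa [charFun_signSumLaw, ProbabilityTheory.charFun_gaussianReal, neg_div] using key

theorem integral_sq_signSumLaw_le (n : ℕ) : ∫ x, x ^ 2 ∂(signSumLaw n : Measure ℝ) ≤ 8 := by
  have hexp (s : ℝ) : ∫ x, Real.exp (s * x) ∂(signSumLaw n : Measure ℝ)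
      = Real.cosh ((√n)⁻¹ * s) ^ n := by
    have hprod (ε : Fin n → ℤˣ) : Real.exp (s * ((√n)⁻¹ * ∑ j, ((ε j : ℤ) : ℝ)))
        = ∏ j, Real.exp ((√n)⁻¹ * s * ((ε j : ℤ) : ℝ)) := by
      rw [← Real.exp_sum, ← Finset.mul_sum]
      ring_nf
    rw [integral_signSumLaw]
    simp only [hprod]
    rw [sum_prod_units_int fun u : ℤˣ ↦ Real.exp ((√n)⁻¹ * s * ((u : ℤ) : ℝ)), Real.cosh_eq,
      div_pow, smul_eq_mul, div_eq_inv_mul]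
    simp
  have hcosh : Real.cosh (√n)⁻¹ ^ n ≤ 2 := by
    calc Real.cosh (√n)⁻¹ ^ n ≤ Real.exp ((√n)⁻¹ ^ 2 / 2) ^ n :=
          pow_le_pow_left₀ (Real.cosh_pos _).le (Real.cosh_le_exp_half_sq _) n
      _ = Real.exp (n * ((n : ℝ)⁻¹ / 2)) := by
          rw [← Real.exp_nat_mul, inv_pow, Real.sq_sqrt n.cast_nonneg]
      _ ≤ Real.exp (Real.log 2) := by
          gcongr
          have : (n : ℝ) * (n : ℝ)⁻¹ ≤ 1 := mul_inv_le_one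
          linarith [Real.log_two_gt_d9]
      _ = 2 := Real.exp_log two_pos
  have hpt (x : ℝ) : x ^ 2 ≤ 2 * (Real.exp (1 * x) + Real.exp (-1 * x)) := by
    rw [← sq_abs, one_mul, neg_one_mul]
    have h1 := Real.quadratic_le_exp_of_nonneg (abs_nonneg x)
    have h2 := Real.exp_abs_le x
    nlinarith [abs_nonneg x]
  calc ∫ x, x ^ 2 ∂(signSumLaw n : Measure ℝ)
      ≤ ∫ x, 2 * (Real.exp (1 * x) + Real.exp (-1 * x)) ∂(signSumLaw n : Measure ℝ) :=
        integral_mono (integrable_signSumLaw n _)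
          (integrable_signSumLaw n _) hpt
    _ = 2 * (Real.cosh (√n)⁻¹ ^ n + Real.cosh (√n)⁻¹ ^ n) := by
        rw [integral_const_mul, integral_add (integrable_signSumLaw n _)
          (integrable_signSumLaw n _), hexp, hexp]
        simp
    _ ≤ 8 := by linarith

/-- Absolute moments of the standard Gaussian. -/
theorem integral_abs_rpow_gaussianReal {q : ℝ} (hq : 0 < q) :
    ∫ x, |x| ^ q ∂(ProbabilityTheory.gaussianReal 0 1)
      = 2 ^ (q / 2) * (Real.Gamma ((q + 1) / 2) / √π) := by
  rw [ProbabilityTheory.integral_gaussianReal_eq_integral_smul one_ne_zero]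
  have h1 : ∀ x : ℝ, ProbabilityTheory.gaussianPDFReal 0 1 x • |x| ^ q
      = (√(2 * π))⁻¹ * (|x| ^ q * Real.exp (-(1 / 2) * |x| ^ (2 : ℝ))) := by
    intro x
    simp [ProbabilityTheory.gaussianPDFReal]
    ring_nf
  simp_rw [h1]
  rw [integral_const_mul, integral_comp_abs (f := fun x ↦ x ^ q * Real.exp (-(1 / 2) * x ^ (2 : ℝ))),
    integral_rpow_mul_exp_neg_mul_rpow two_pos (by linarith) (by norm_num), Real.sqrt_mul two_pos.le,
    one_div (2 : ℝ), Real.inv_rpow two_pos.le, ← Real.rpow_neg two_pos.le, neg_div, neg_neg,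
    show (q + 1) / 2 = q / 2 + 1 / 2 by ring, Real.rpow_add two_pos, ← Real.sqrt_eq_rpow]
  have : √2 ≠ 0 := by positivity
  have : √π ≠ 0 := by positivity
  field_simp

theorem abs_rpow_le_min_rpow_add {q : ℝ} (hq2 : q ≤ 2) {K : ℝ} (hK : 0 < K) (x : ℝ) :
    |x| ^ q ≤ min |x| K ^ q + K ^ (q - 2) * x ^ 2 := by
  rcases le_or_gt |x| K with h | h
  · rw [min_eq_left h]
    exact le_add_of_nonneg_right (by positivity)
  · have hx : 0 < |x| := hK.trans h
    have h1 : |x| ^ q = |x| ^ (q - 2) * x ^ 2 := by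
      rw [← sq_abs x, ← Real.rpow_natCast |x| 2, ← Real.rpow_add hx]
      norm_num
    rw [h1]
    refine le_add_of_nonneg_of_le (by positivity) ?_
    gcongr ?_ * _
    exact Real.rpow_le_rpow_of_nonpos hK h.le (by linarith)

/-- A bound from below on the absolute moments of all the normalized Rademacher sums passes to the
Gaussian limit. -/
theorem le_integral_abs_rpow_gaussianReal {q : ℝ} (hq : 0 < q) (hq2 : q < 2) {c : ℝ}
    (hc : ∀ n ≥ 1, c ≤ ∫ x, |x| ^ q ∂(signSumLaw n : Measure ℝ)) :
    c ≤ ∫ x, |x| ^ q ∂(ProbabilityTheory.gaussianReal 0 1) := by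
  have hcont {K : ℝ} : Continuous fun x : ℝ ↦ min |x| K ^ q :=
    (continuous_abs.min continuous_const).rpow_const fun _ ↦ .inr hq.le
  have hK {K : ℝ} (hK : 0 < K) :
      c ≤ ∫ x, |x| ^ q ∂(ProbabilityTheory.gaussianReal 0 1) + K ^ (q - 2) * 8 := by
    have hbdd (x : ℝ) : ‖min |x| K ^ q‖ ≤ K ^ q := by
      have : 0 ≤ min |x| K := le_min (abs_nonneg x) hK.le
      rw [Real.norm_of_nonneg (by positivity)]
      gcongr
      exact min_le_right _ _
    let F : BoundedContinuousFunction ℝ ℝ := .ofNormedAddCommGroup _ hcont _ hbdd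
    have hlim := ProbabilityMeasure.tendsto_iff_forall_integral_tendsto.1 tendsto_signSumLaw F
    have hle : c - K ^ (q - 2) * 8 ≤ ∫ x, F x ∂(ProbabilityTheory.gaussianReal 0 1) := by
      refine ge_of_tendsto hlim ?_
      filter_upwards [eventually_ge_atTop 1] with n hn
      have h1 : ∫ x, |x| ^ q ∂(signSumLaw n : Measure ℝ)
          ≤ ∫ x, (min |x| K ^ q + K ^ (q - 2) * x ^ 2) ∂(signSumLaw n : Measure ℝ) :=
        integral_mono (integrable_signSumLaw n _)
          (integrable_signSumLaw n _) fun x ↦ abs_rpow_le_min_rpow_add hq2.le hK x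
      rw [integral_add (integrable_signSumLaw n _) (integrable_signSumLaw n _),
        integral_const_mul] at h1
      have h2 : K ^ (q - 2) * ∫ x, x ^ 2 ∂(signSumLaw n : Measure ℝ) ≤ K ^ (q - 2) * 8 := by
        gcongr
        exact integral_sq_signSumLaw_le n
      have h3 := hc n hn
      change _ ≤ ∫ x, min |x| K ^ q ∂(signSumLaw n : Measure ℝ)
      linarith
    have hmono : ∫ x, F x ∂(ProbabilityTheory.gaussianReal 0 1)
        ≤ ∫ x, |x| ^ q ∂(ProbabilityTheory.gaussianReal 0 1) := by
      refine integral_mono (F.integrable _) ?_ fun x ↦ ?_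
      · have := (ProbabilityTheory.memLp_id_gaussianReal
          (μ := 0) (v := 1) q.toNNReal).integrable_norm_rpow'
        simpa [hq.le] using this
      · have : 0 ≤ min |x| K := le_min (abs_nonneg x) hK.le
        exact Real.rpow_le_rpow this (min_le_left _ _) hq.le
    linarith
  have hlim : Tendsto (fun K : ℝ ↦ ∫ x, |x| ^ q ∂(ProbabilityTheory.gaussianReal 0 1)
      + K ^ (q - 2) * 8) atTop (nhds (∫ x, |x| ^ q ∂(ProbabilityTheory.gaussianReal 0 1) + 0 * 8)) := by
    refine tendsto_const_nhds.add (Tendsto.mul_const _ ?_)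
    simpa using tendsto_rpow_neg_atTop (y := 2 - q) (by linarith)
  rw [zero_mul, add_zero] at hlim
  refine ge_of_tendsto hlim ?_
  filter_upwards [eventually_gt_atTop 0] with K h using hK h
/-- Optimality: any constant in the mixed `(ℓ_{p/(p-1)}, ℓ₂)`-Littlewood inequality is
at least `A_{p/(p-1)}`. -/
theorem mixed_littlewood_bilinear_optimal (p : ℝ) (hp : 2 ≤ p) (C : ℝ) (hC : 0 ≤ C)
    (h : ∀ (n : ℕ) (T : (Fin n → ℝ) →ₗ[ℝ] (Fin n → ℝ) →ₗ[ℝ] ℝ),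
      (∑ i : Fin n, (∑ j : Fin n, |T (Pi.single i 1) (Pi.single j 1)| ^ (2 : ℝ))
          ^ ((1 / 2) * (p / (p - 1)))) ^ ((p - 1) / p)
        ≤ C * bilinOpNorm p T) :
    khintchineA (p / (p - 1)) ≤ C := by
  have key := two_pow_mul_rpow_le_of_mixed_littlewood hp hC h
  set q := p / (p - 1)
  have hq : 0 < q := div_pos (by linarith) (by linarith)
  have hC1 : 1 ≤ C := by
    have hk := key 1
    have hsum : ∑ ε : Fin 1 → ℤˣ, |∑ j, ((ε j : ℤ) : ℝ)| ^ q = 2 := by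
      have := sum_prod_units_int (fun u : ℤˣ ↦ |((u : ℤ) : ℝ)| ^ q) 1
      simp only [Fin.prod_univ_one] at this
      simp [this]
      norm_num
    rw [hsum] at hk
    rw [← Real.rpow_le_rpow_iff zero_le_one hC hq, Real.one_rpow]
    simp at hk
    linarith
  unfold khintchineA
  split_ifs with h1 h2
  · have hk := key 2
    have hsum : ∑ ε : Fin 2 → ℤˣ, |∑ j, ((ε j : ℤ) : ℝ)| ^ q = 2 * 2 ^ q := by
      rw [← (finTwoArrowEquiv ℤˣ).symm.sum_comp, Fintype.sum_prod_type]
      simp [UnitsInt.univ, Real.zero_rpow hq.ne']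
      norm_num
      ring
    rw [hsum] at hk
    have hle : (2 : ℝ) ^ (1 + 1 / 2 * q - q) ≤ C ^ q := by
      rw [Real.rpow_sub two_pos, Real.rpow_add two_pos, div_le_iff₀ (by positivity), Real.rpow_one]
      push_cast at hk
      linarith
    rw [← Real.rpow_le_rpow_iff (by positivity) hC hq, ← Real.rpow_mul two_pos.le]
    convert hle using 2
    field_simp
    ring
  · have hmom := le_integral_abs_rpow_gaussianReal hq h2 (c := (C ^ q)⁻¹) fun n hn ↦ ?_
    · rw [integral_abs_rpow_gaussianReal hq] at hmom
      have hG : 0 < Real.Gamma ((q + 1) / 2) / √π := by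
        have := Real.Gamma_pos_of_pos (s := (q + 1) / 2) (by linarith)
        positivity
      have hsqrt : (1 / √2) ^ q = ((2 : ℝ) ^ (q / 2))⁻¹ := by
        rw [one_div, Real.inv_rpow (by positivity), Real.sqrt_eq_rpow, ← Real.rpow_mul two_pos.le,
          one_div_mul_eq_div]
      rw [← Real.rpow_le_rpow_iff (by positivity) hC hq,
        Real.mul_rpow (by positivity) (by positivity), hsqrt, ← Real.rpow_mul hG.le, neg_mul, one_div_mul_cancel hq.ne', Real.rpow_neg_one,
        ← mul_inv]
      exact inv_le_of_inv_le₀ (by positivity) hmom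
    · have hn0 : (0 : ℝ) < n := by exact_mod_cast hn
      have hk := key n
      have hscale (x : ℝ) : |(√n)⁻¹ * x| ^ q = ((n : ℝ) ^ (1 / 2 * q))⁻¹ * |x| ^ q := by
        rw [abs_mul, Real.mul_rpow (abs_nonneg _) (abs_nonneg _), abs_of_nonneg (by positivity),
          Real.inv_rpow (by positivity), Real.sqrt_eq_rpow, ← Real.rpow_mul hn0.le]
      rw [integral_signSumLaw]
      simp only [hscale, ← Finset.mul_sum, smul_eq_mul]
      rw [← mul_assoc, ← mul_inv, inv_mul_eq_div, le_div_iff₀ (by positivity),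
        inv_mul_le_iff₀ (by positivity)]
      exact hk
  · exact hC1
end
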